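/- Let L be an odd unimodular lattice in dimension 44 having minimum norm 4. Then there exist nonnegative integers α and β such that: the number of vectors of L of norm 4 equals 6600 + 16α, the number of vectors of L of norm 5 equals 811008 − 128α − 65536β, the number of vectors of the shadow S(L) of norm 1 equals β, and the number of vectors of S(L) of norm 3 equals α − 76β. -/

import Mathlib

open scoped RealInnerProductSpace

noncomputable section

/-- The norm `(x, x)` of a vector `x ∈ ℝⁿ` (squared Euclidean length). -/
def normOf {n : ℕ} (x : EuclideanSpace ℝ (Fin n)) : ℝ := ⟪x, x⟫

/-- The dual `L* = {x ∈ ℝⁿ : (x,y) ∈ ℤ for all y ∈ L}` of a set of vectors. -/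
def dualSet {n : ℕ} (L : Set (EuclideanSpace ℝ (Fin n))) : Set (EuclideanSpace ℝ (Fin n)) :=
  {x | ∀ y ∈ L, ∃ m : ℤ, ⟪x, y⟫ = (m : ℝ)}

/-- `L` is a unimodular lattice: `L = L*`. -/
def IsUnimodularLattice {n : ℕ} (L : Set (EuclideanSpace ℝ (Fin n))) : Prop :=
  L = dualSet L

/-- `L` is odd: some vector of `L` has odd (integral) norm. -/
def IsOddLattice {n : ℕ} (L : Set (EuclideanSpace ℝ (Fin n))) : Prop :=
  ∃ x ∈ L, ∃ m : ℤ, Odd m ∧ normOf x = (m : ℝ)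

/-- The even sublattice `L₀ = {x ∈ L : (x,x) even}`. -/
def evenSublattice {n : ℕ} (L : Set (EuclideanSpace ℝ (Fin n))) :
    Set (EuclideanSpace ℝ (Fin n)) :=
  {x | x ∈ L ∧ ∃ m : ℤ, normOf x = 2 * (m : ℝ)}

/-- The shadow `S(L) = L₀* \ L`. -/
def shadow {n : ℕ} (L : Set (EuclideanSpace ℝ (Fin n))) : Set (EuclideanSpace ℝ (Fin n)) :=
  dualSet (evenSublattice L) \ L

/-- `L` has minimum norm `r`: `r` is the least norm among nonzero vectors of `L`. -/
def HasMinNorm {n : ℕ} (L : Set (EuclideanSpace ℝ (Fin n))) (r : ℝ) : Prop :=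
  IsLeast {s : ℝ | ∃ x ∈ L, x ≠ 0 ∧ normOf x = s} r

/-- The shadow `S(L)` has minimum norm `r`. -/
def HasShadowMinNorm {n : ℕ} (L : Set (EuclideanSpace ℝ (Fin n))) (r : ℝ) : Prop :=
  IsLeast {s : ℝ | ∃ x ∈ shadow L, normOf x = s} r

/-- `σ(L) = r`, i.e. `4 · min(S(L)) = r`. -/
def HasSigma {n : ℕ} (L : Set (EuclideanSpace ℝ (Fin n))) (r : ℝ) : Prop :=
  ∃ s : ℝ, HasShadowMinNorm L s ∧ r = 4 * s

/-- The number of vectors of norm `r` in `L`; when `L` has minimum norm `r`,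
this is the kissing number of `L`. -/
def numVecsOfNorm {n : ℕ} (L : Set (EuclideanSpace ℝ (Fin n))) (r : ℝ) : ℕ :=
  Set.ncard {x ∈ L | normOf x = r}

/-!
Jacobi inversion makes the theta series of `L`, its translate by `T : τ ↦ τ + 1` and the theta
series of the shadow into a triple `(A, B, C)` which the generators `S` and `T` of `SL₂(ℤ)` permute
up to sign and automorphy factor; `T`-equivariance forces the shadow to have odd norms. The lattice
`ℤ⁴` gives another such triple `(x, y, w) = (θ₃⁴, θ₄⁴, θ₂⁴)`. Hence
`A x (y - w) + B y (x + w) - C w (x + y)` and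
`A x⁵ y w (y - w) - B y⁵ x w (x + w) + C w⁵ x y (x + y)` are modular forms of level one and weights
26 and 38. The leading coefficients of such forms satisfy linear relations, coming from the absence
of a form of weight 2, and these are the two equations between the numbers of vectors of `L` and of
its shadow.
-/

section InitialCoefficients

open PowerSeries

/-- `φ = a₀ + a₁ X + ⋯ + a₆ X⁶ + O(X⁷)`. -/
structure HasInitialCoeffs (φ : ℂ⟦X⟧) (a₀ a₁ a₂ a₃ a₄ a₅ a₆ : ℂ) : Prop where
  coeff_zero : φ.coeff 0 = a₀
  coeff_one : φ.coeff 1 = a₁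
  coeff_two : φ.coeff 2 = a₂
  coeff_three : φ.coeff 3 = a₃
  coeff_four : φ.coeff 4 = a₄
  coeff_five : φ.coeff 5 = a₅
  coeff_six : φ.coeff 6 = a₆

namespace HasInitialCoeffs

variable {φ ψ : ℂ⟦X⟧} {a₀ a₁ a₂ a₃ a₄ a₅ a₆ b₀ b₁ b₂ b₃ b₄ b₅ b₆ : ℂ}

lemma add (hφ : HasInitialCoeffs φ a₀ a₁ a₂ a₃ a₄ a₅ a₆)
    (hψ : HasInitialCoeffs ψ b₀ b₁ b₂ b₃ b₄ b₅ b₆) :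
    HasInitialCoeffs (φ + ψ) (a₀ + b₀) (a₁ + b₁) (a₂ + b₂) (a₃ + b₃) (a₄ + b₄) (a₅ + b₅)
      (a₆ + b₆) := by
  obtain ⟨rfl, rfl, rfl, rfl, rfl, rfl, rfl⟩ := hφ
  obtain ⟨rfl, rfl, rfl, rfl, rfl, rfl, rfl⟩ := hψ
  constructor <;> exact map_add ..

lemma sub (hφ : HasInitialCoeffs φ a₀ a₁ a₂ a₃ a₄ a₅ a₆)
    (hψ : HasInitialCoeffs ψ b₀ b₁ b₂ b₃ b₄ b₅ b₆) :
    HasInitialCoeffs (φ - ψ) (a₀ - b₀) (a₁ - b₁) (a₂ - b₂) (a₃ - b₃) (a₄ - b₄) (a₅ - b₅)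
      (a₆ - b₆) := by
  obtain ⟨rfl, rfl, rfl, rfl, rfl, rfl, rfl⟩ := hφ
  obtain ⟨rfl, rfl, rfl, rfl, rfl, rfl, rfl⟩ := hψ
  constructor <;> exact map_sub ..

lemma smul (c : ℂ) (hφ : HasInitialCoeffs φ a₀ a₁ a₂ a₃ a₄ a₅ a₆) :
    HasInitialCoeffs (c • φ) (c * a₀) (c * a₁) (c * a₂) (c * a₃) (c * a₄) (c * a₅) (c * a₆) := by
  obtain ⟨rfl, rfl, rfl, rfl, rfl, rfl, rfl⟩ := hφ
  constructor <;> exact map_smul ..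

lemma mul (hφ : HasInitialCoeffs φ a₀ a₁ a₂ a₃ a₄ a₅ a₆)
    (hψ : HasInitialCoeffs ψ b₀ b₁ b₂ b₃ b₄ b₅ b₆) :
    HasInitialCoeffs (φ * ψ) (a₀ * b₀) (a₀ * b₁ + a₁ * b₀) (a₀ * b₂ + a₁ * b₁ + a₂ * b₀)
      (a₀ * b₃ + a₁ * b₂ + a₂ * b₁ + a₃ * b₀)
      (a₀ * b₄ + a₁ * b₃ + a₂ * b₂ + a₃ * b₁ + a₄ * b₀)
      (a₀ * b₅ + a₁ * b₄ + a₂ * b₃ + a₃ * b₂ + a₄ * b₁ + a₅ * b₀)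
      (a₀ * b₆ + a₁ * b₅ + a₂ * b₄ + a₃ * b₃ + a₄ * b₂ + a₅ * b₁ + a₆ * b₀) := by
  obtain ⟨rfl, rfl, rfl, rfl, rfl, rfl, rfl⟩ := hφ
  obtain ⟨rfl, rfl, rfl, rfl, rfl, rfl, rfl⟩ := hψ
  constructor <;>
  simp [coeff_mul, Finset.Nat.antidiagonal_succ, -coeff_zero_eq_constantCoeff] <;> ring

lemma sq (hφ : HasInitialCoeffs φ a₀ a₁ a₂ a₃ a₄ a₅ a₆) :
    HasInitialCoeffs (φ ^ 2) (a₀ ^ 2) (2 * a₀ * a₁) (2 * a₀ * a₂ + a₁ ^ 2)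
      (2 * a₀ * a₃ + 2 * a₁ * a₂) (2 * a₀ * a₄ + 2 * a₁ * a₃ + a₂ ^ 2)
      (2 * a₀ * a₅ + 2 * a₁ * a₄ + 2 * a₂ * a₃)
      (2 * a₀ * a₆ + 2 * a₁ * a₅ + 2 * a₂ * a₄ + a₃ ^ 2) := by
  rw [pow_two]
  convert hφ.mul hφ using 1 <;> ring

lemma rescale_neg_one (hφ : HasInitialCoeffs φ a₀ a₁ a₂ a₃ a₄ a₅ a₆) :
    HasInitialCoeffs (rescale (-1) φ) a₀ (-a₁) a₂ (-a₃) a₄ (-a₅) a₆ := by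
  obtain ⟨rfl, rfl, rfl, rfl, rfl, rfl, rfl⟩ := hφ
  constructor <;> norm_num [coeff_rescale, -coeff_zero_eq_constantCoeff]

end HasInitialCoeffs

end InitialCoefficients

section LevelOne

open UpperHalfPlane ModularForm ModularFormClass MatrixGroups EisensteinSeries

lemma hasInitialCoeffs_E₄ :
    HasInitialCoeffs (qExpansion 1 E₄) 1 240 2160 6720 17520 30240 60480 := by
  have coeff_eq (n : ℕ) (hn : n ≠ 0) :
      (qExpansion 1 E₄).coeff n = 240 * (∑ d ∈ n.divisors, d ^ 3 : ℕ) := by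
    rw [E_qExpansion_coeff _ ⟨2, rfl⟩, if_neg hn, show bernoulli 4 = -1 / 30 by decide +kernel,
      ArithmeticFunction.sigma_apply]
    norm_num
  refine ⟨E_qExpansion_coeff_zero _ ⟨2, rfl⟩, ?_, ?_, ?_, ?_, ?_, ?_⟩ <;>
  · rw [coeff_eq _ (by decide)]
    norm_cast

lemma hasInitialCoeffs_E₆ :
    HasInitialCoeffs (qExpansion 1 E₆) 1 (-504) (-16632) (-122976) (-532728) (-1575504)
      (-4058208) := by
  have coeff_eq (n : ℕ) (hn : n ≠ 0) :
      (qExpansion 1 E₆).coeff n = -504 * (∑ d ∈ n.divisors, d ^ 5 : ℕ) := by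
    rw [E_qExpansion_coeff _ ⟨3, rfl⟩, if_neg hn, show bernoulli 6 = 1 / 42 by decide +kernel,
      ArithmeticFunction.sigma_apply]
    norm_num
  refine ⟨E_qExpansion_coeff_zero _ ⟨3, rfl⟩, ?_, ?_, ?_, ?_, ?_, ?_⟩ <;>
  · rw [coeff_eq _ (by decide)]
    norm_cast

lemma qExpansion_discriminant :
    qExpansion 1 ModularForm.discriminant =
      (1 / 1728 : ℂ) • (qExpansion 1 E₄ ^ 3 - qExpansion 1 E₆ ^ 2) := by
  have discriminant_eq : ModularForm.discriminant =
      ⇑((1 / 1728 : ℂ) • (ModularForm.mcast (by decide) (E₄.pow 3) -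
        ModularForm.mcast (by decide) (E₆.pow 2) : ModularForm 𝒮ℒ 12)) := by
    ext z
    rw [discriminant_eq_E₄_cube_sub_E₆_sq, FunLike.coe_smul, FunLike.coe_sub]
    simp only [coe_mcast, ModularForm.coe_pow, Pi.smul_apply, Pi.sub_apply, Pi.pow_apply,
      smul_eq_mul]
    ring
  rw [discriminant_eq, FunLike.coe_smul,
    ModularForm.qExpansion_smul one_pos one_mem_strictPeriods_SL, FunLike.coe_sub,
    ModularForm.qExpansion_sub one_pos one_mem_strictPeriods_SL,
    ModularForm.qExpansion_mcast, ModularForm.qExpansion_mcast,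
    ModularForm.qExpansion_pow one_pos one_mem_strictPeriods_SL,
    ModularForm.qExpansion_pow one_pos one_mem_strictPeriods_SL]

lemma hasInitialCoeffs_discriminant :
    HasInitialCoeffs (qExpansion 1 ModularForm.discriminant) 0 1 (-24) 252 (-1472) 4830
      (-6048) := by
  rw [qExpansion_discriminant, pow_succ]
  convert ((hasInitialCoeffs_E₄.sq.mul hasInitialCoeffs_E₄).sub hasInitialCoeffs_E₆.sq).smul
    (1 / 1728) using 1 <;> norm_num

lemma exists_qExpansion_eq_smul_add_discriminant_mul {k : ℤ} {E : ModularForm 𝒮ℒ k}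
    (hE : (qExpansion 1 E).coeff 0 = 1) (f : ModularForm 𝒮ℒ k) :
    ∃ g : ModularForm 𝒮ℒ (k - 12), qExpansion 1 f =
      (qExpansion 1 f).coeff 0 • qExpansion 1 E +
        qExpansion 1 ModularForm.discriminant * qExpansion 1 g := by
  set c := (qExpansion 1 f).coeff 0
  obtain ⟨f₀, hf₀⟩ : ∃ f₀ : ModularForm 𝒮ℒ k,
      qExpansion 1 f₀ = qExpansion 1 f - c • qExpansion 1 E := by
    refine ⟨f - c • E, ?_⟩
    rw [FunLike.coe_sub, ModularForm.qExpansion_sub one_pos one_mem_strictPeriods_SL,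
      FunLike.coe_smul, ModularForm.qExpansion_smul one_pos one_mem_strictPeriods_SL]
  have coeff_zero : (qExpansion 1 f₀).coeff 0 = 0 := by
    rw [hf₀, map_sub, map_smul, hE, smul_eq_mul, mul_one, sub_self]
  refine ⟨CuspForm.discriminantEquiv (toCuspForm f₀ coeff_zero), ?_⟩
  rw [← qExpansion_eq_qExpansion_discriminant_mul f₀ coeff_zero, hf₀, add_sub_cancel]

/-- The normalised modular form `E₄² E₆` of weight 14. -/
def eisensteinFourteen : ModularForm 𝒮ℒ 14 :=
  ModularForm.mcast (by decide) ((E₄.pow 2).mul E₆)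

lemma hasInitialCoeffs_eisensteinFourteen :
    HasInitialCoeffs (qExpansion 1 eisensteinFourteen) 1 (-24) (-196632) (-38263776)
      (-1610809368) (-29296875024) (-313495116768) := by
  rw [eisensteinFourteen, ModularForm.qExpansion_mcast,
    ModularForm.qExpansion_mul one_pos one_mem_strictPeriods_SL,
    ModularForm.qExpansion_pow one_pos one_mem_strictPeriods_SL]
  convert hasInitialCoeffs_E₄.sq.mul hasInitialCoeffs_E₆ using 1 <;> norm_num

/-- The normalised modular form `E₄⁵ E₆` of weight 26. -/
def eisensteinTwentySix : ModularForm 𝒮ℒ 26 :=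
  ModularForm.mcast (by decide) (eisensteinFourteen.mul (E₄.pow 3))

lemma hasInitialCoeffs_eisensteinTwentySix :
    HasInitialCoeffs (qExpansion 1 eisensteinTwentySix) 1 696 (-34632) (-167186976)
      (-64422848328) (-11387712944304) (-1037073232984608) := by
  rw [eisensteinTwentySix, ModularForm.qExpansion_mcast,
    ModularForm.qExpansion_mul one_pos one_mem_strictPeriods_SL,
    ModularForm.qExpansion_pow one_pos one_mem_strictPeriods_SL, pow_succ]
  convert hasInitialCoeffs_eisensteinFourteen.mul
    (hasInitialCoeffs_E₄.sq.mul hasInitialCoeffs_E₄) using 1 <;> norm_num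

lemma qExpansion_eq_smul_of_weight_fourteen (f : ModularForm 𝒮ℒ 14) :
    qExpansion 1 f = (qExpansion 1 f).coeff 0 • qExpansion 1 eisensteinFourteen := by
  obtain ⟨g, hg⟩ := exists_qExpansion_eq_smul_add_discriminant_mul
    hasInitialCoeffs_eisensteinFourteen.coeff_zero f
  have g_eq_zero : qExpansion 1 g = 0 := by
    rw [rank_zero_iff_forall_zero.mp levelOne_weight_two_rank_zero g]
    exact qExpansion_zero 1
  rwa [g_eq_zero, mul_zero, add_zero] at hg

lemma weight_twentySix_coeff_relation (f : ModularForm 𝒮ℒ 26) :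
    (qExpansion 1 f).coeff 2 + 48 * (qExpansion 1 f).coeff 1 + 1224 * (qExpansion 1 f).coeff 0
      = 0 := by
  obtain ⟨g, hf⟩ := exists_qExpansion_eq_smul_add_discriminant_mul
    hasInitialCoeffs_eisensteinTwentySix.coeff_zero f
  have hg := qExpansion_eq_smul_of_weight_fourteen g
  have coeffs := (hasInitialCoeffs_eisensteinTwentySix.smul ((qExpansion 1 f).coeff 0)).add
    (hasInitialCoeffs_discriminant.mul
      (hasInitialCoeffs_eisensteinFourteen.smul ((qExpansion 1 g).coeff 0)))
  rw [← hg, ← hf] at coeffs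
  linear_combination coeffs.coeff_two + 48 * coeffs.coeff_one

/-- This is the weight 26 relation for `f / Δ`. -/
lemma weight_thirtyEight_coeff_relation (f : ModularForm 𝒮ℒ 38)
    (hf : (qExpansion 1 f).coeff 0 = 0) :
    (qExpansion 1 f).coeff 3 + 72 * (qExpansion 1 f).coeff 2 + 2700 * (qExpansion 1 f).coeff 1
      = 0 := by
  set g : ModularForm 𝒮ℒ 26 := CuspForm.discriminantEquiv (toCuspForm f hf)
  have g_coeffs : HasInitialCoeffs (qExpansion 1 g) _ _ _ _ _ _ _ :=
    ⟨rfl, rfl, rfl, rfl, rfl, rfl, rfl⟩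
  have f_coeffs := hasInitialCoeffs_discriminant.mul g_coeffs
  rw [← qExpansion_eq_qExpansion_discriminant_mul f hf] at f_coeffs
  linear_combination f_coeffs.coeff_three + 72 * f_coeffs.coeff_two +
    2700 * f_coeffs.coeff_one + weight_twentySix_coeff_relation g

end LevelOne

section NomeExpansions

open UpperHalfPlane hiding I
open ModularForm ModularFormClass MatrixGroups PowerSeries Complex ModularGroup
open scoped Manifold Real

/-- The nome `q = exp (π i τ)`, in which theta series of integral lattices are power series. -/
def nome (τ : ℍ) : ℂ := Function.Periodic.qParam 2 τ

lemma nome_eq (τ : ℍ) : nome τ = cexp (π * I * τ) := by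
  rw [nome, Function.Periodic.qParam]
  congr 1
  push_cast
  ring

lemma nome_T_smul (τ : ℍ) : nome (T • τ) = -nome τ := by
  rw [nome_eq, nome_eq, modular_T_smul, coe_vadd, mul_add, Complex.exp_add]
  simp

/-- `f τ = ∑ aₙ qⁿ` for all `τ`, where `φ = ∑ aₙ Xⁿ` and `q` is the nome of `τ`. -/
def HasNomeExpansion (f : ℍ → ℂ) (φ : ℂ⟦X⟧) : Prop :=
  ∀ τ : ℍ, HasSum (fun n ↦ φ.coeff n * nome τ ^ n) (f τ)

namespace HasNomeExpansion

variable {f g : ℍ → ℂ} {φ ψ : ℂ⟦X⟧}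

lemma add (hf : HasNomeExpansion f φ) (hg : HasNomeExpansion g ψ) :
    HasNomeExpansion (f + g) (φ + ψ) := fun τ ↦ by
  simpa only [Pi.add_apply, map_add, add_mul] using (hf τ).add (hg τ)

lemma sub (hf : HasNomeExpansion f φ) (hg : HasNomeExpansion g ψ) :
    HasNomeExpansion (f - g) (φ - ψ) := fun τ ↦ by
  simpa only [Pi.sub_apply, map_sub, sub_mul] using (hf τ).sub (hg τ)

lemma mul (hf : HasNomeExpansion f φ) (hg : HasNomeExpansion g ψ) :
    HasNomeExpansion (f * g) (φ * ψ) := fun τ ↦ by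
  have hf_norm := (hf τ).summable.norm
  have hg_norm := (hg τ).summable.norm
  have cauchy :=
    (summable_norm_sum_mul_antidiagonal_of_summable_norm hf_norm hg_norm).of_norm.hasSum
  rw [← tsum_mul_tsum_eq_tsum_sum_antidiagonal_of_summable_norm hf_norm hg_norm, (hf τ).tsum_eq,
    (hg τ).tsum_eq] at cauchy
  refine cauchy.congr_fun fun n ↦ ?_
  rw [coeff_mul, Finset.sum_mul]
  refine Finset.sum_congr rfl fun p hp ↦ ?_
  rw [← Finset.HasAntidiagonal.mem_antidiagonal.mp hp, pow_add]
  ring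

lemma one : HasNomeExpansion 1 1 := fun τ ↦ by
  convert hasSum_single 0 fun n hn ↦ ?_ using 1
  · simp
  · simp [coeff_one, hn]

lemma pow (hf : HasNomeExpansion f φ) (n : ℕ) : HasNomeExpansion (f ^ n) (φ ^ n) := by
  induction n with
  | zero => simpa only [pow_zero] using one
  | succ n ih => simpa only [pow_succ] using ih.mul hf

lemma comp_T_smul (hf : HasNomeExpansion f φ) :
    HasNomeExpansion (fun τ ↦ f (T • τ)) (rescale (-1) φ) := fun τ ↦ by
  refine (hf (T • τ)).congr_fun fun n ↦ ?_
  rw [nome_T_smul, coeff_rescale, neg_pow (nome τ)]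
  ring

/-- The terms on the half plane `im z > im τ / 2` are dominated by those at `i im τ / 2`. -/
lemma mdifferentiable (hf : HasNomeExpansion f φ) : MDiff f := by
  intro τ
  rw [mdifferentiableAt_iff]
  let τ' : ℍ := ⟨(τ.im / 2 : ℝ) * I, by simpa using half_pos τ.im_pos⟩
  let U : Set ℂ := {z | τ.im / 2 < z.im}
  have isOpen_U : IsOpen U := isOpen_lt continuous_const continuous_im
  have τ_mem : (τ : ℂ) ∈ U := half_lt_self τ.im_pos
  have norm_le (z : ℂ) (hz : z ∈ U) : ‖Function.Periodic.qParam 2 z‖ ≤ ‖nome τ'‖ := by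
    rw [nome, Function.Periodic.norm_qParam, Function.Periodic.norm_qParam]
    have τ'_im : (τ' : ℂ).im = τ.im / 2 := by simp [τ']
    have z_im_gt : τ.im / 2 < z.im := hz
    rw [τ'_im]
    gcongr Real.exp (?_ / 2)
    nlinarith [Real.pi_pos]
  have differentiableOn : DifferentiableOn ℂ
      (fun z ↦ ∑' n, φ.coeff n * Function.Periodic.qParam 2 z ^ n) U := by
    refine differentiableOn_tsum_of_summable_norm (hf τ').summable.norm (fun n ↦ ?_) isOpen_U
      fun n z hz ↦ ?_
    · exact ((Function.Periodic.differentiable_qParam.pow n).const_mul _).differentiableOn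
    · rw [norm_mul, norm_mul, norm_pow, norm_pow]
      gcongr
      exact norm_le z hz
  refine (differentiableOn.differentiableAt (isOpen_U.mem_nhds τ_mem)).congr_of_eventuallyEq ?_
  filter_upwards [isOpen_U.mem_nhds τ_mem] with z hz
  have z_im_pos : 0 < z.im := (half_pos τ.im_pos).trans hz
  rw [Function.comp_apply, ofComplex_apply_of_im_pos z_im_pos]
  exact (hf ⟨z, z_im_pos⟩).tsum_eq.symm

lemma isBoundedAtImInfty (hf : HasNomeExpansion f φ) : IsBoundedAtImInfty f :=
  isBoundedAtImInfty_of_hasSum_qExpansion two_pos hf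

lemma qExpansion_two_eq {k : ℤ} {F : ModularForm 𝒮ℒ k} (hF : HasNomeExpansion F φ) :
    qExpansion 2 F = φ := by
  have two_mem_strictPeriods : (2 : ℝ) ∈ (𝒮ℒ).strictPeriods := by
    simpa [one_add_one_eq_two] using add_mem one_mem_strictPeriods_SL one_mem_strictPeriods_SL
  ext n
  exact (ModularFormClass.qExpansion_coeff_unique two_pos two_mem_strictPeriods hF n).symm

end HasNomeExpansion

lemma hasNomeExpansion_expand {k : ℤ} (F : ModularForm 𝒮ℒ k) :
    HasNomeExpansion F (expand 2 two_ne_zero (qExpansion 1 F)) := fun τ ↦ by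
  have nome_sq : nome τ ^ 2 = Function.Periodic.qParam 1 τ := by
    rw [nome_eq, ← Complex.exp_nat_mul, Function.Periodic.qParam]
    congr 1
    push_cast
    ring
  refine (Function.Injective.hasSum_iff (mul_right_injective₀ two_ne_zero) fun n hn ↦ ?_).mp
    ((hasSum_qExpansion F one_pos one_mem_strictPeriods_SL τ).congr_fun fun n ↦ ?_)
  · rw [coeff_expand_of_not_dvd _ _ _ fun ⟨m, hm⟩ ↦ hn ⟨m, hm.symm⟩, zero_mul]
  · simp [coeff_expand_mul, pow_mul, nome_sq]

lemma coeff_qExpansion_of_hasNomeExpansion {k : ℤ} {F : ModularForm 𝒮ℒ k} {φ : ℂ⟦X⟧}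
    (hF : HasNomeExpansion F φ) (n : ℕ) : (qExpansion 1 F).coeff n = φ.coeff (2 * n) := by
  rw [← hF.qExpansion_two_eq, (hasNomeExpansion_expand F).qExpansion_two_eq, coeff_expand_mul]

lemma exists_modularForm_of_S_of_T {f : ℍ → ℂ} {k : ℕ} (hT : ∀ τ, f (T • τ) = f τ)
    (hS : ∀ τ : ℍ, f (S • τ) = (τ : ℂ) ^ k * f τ) (holo : MDiff f)
    (bdd : IsBoundedAtImInfty f) : ∃ F : ModularForm 𝒮ℒ k, ⇑F = f := by
  have slash_S : f ∣[(k : ℤ)] S = f := by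
    ext τ
    rw [SL_slash_apply, hS, denom_S, zpow_neg, zpow_natCast, mul_right_comm,
      mul_inv_cancel₀ (pow_ne_zero _ τ.ne_zero), one_mul]
  have slash_T : f ∣[(k : ℤ)] T = f := by
    ext τ
    have denom_T : denom T τ = 1 := by
      rw [ModularGroup.denom_apply]
      simp [ModularGroup.T]
    rw [SL_slash_apply, hT, denom_T, one_zpow, mul_one]
  have slash := SlashInvariantForm.slash_action_generators_SL2Z slash_S slash_T
  refine ⟨⟨⟨f, ?_⟩, holo, fun {c} hc ↦ ?_⟩, rfl⟩
  · rintro _ ⟨γ, rfl⟩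
    exact slash γ
  · rw [Subgroup.IsArithmetic.isCusp_iff_isCusp_SL2Z] at hc
    rw [OnePoint.isBoundedAt_iff_forall_SL2Z hc]
    intro γ _
    rw [slash]
    exact bdd

lemma HasNomeExpansion.exists_modularForm {f : ℍ → ℂ} {φ : ℂ⟦X⟧} {k : ℕ}
    (hf : HasNomeExpansion f φ) (hT : ∀ τ, f (T • τ) = f τ)
    (hS : ∀ τ : ℍ, f (S • τ) = (τ : ℂ) ^ k * f τ) :
    ∃ F : ModularForm 𝒮ℒ k, ∀ n, (qExpansion 1 F).coeff n = φ.coeff (2 * n) := by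
  obtain ⟨F, rfl⟩ := exists_modularForm_of_S_of_T hT hS hf.mdifferentiable hf.isBoundedAtImInfty
  exact ⟨F, coeff_qExpansion_of_hasNomeExpansion hf⟩

lemma hasNomeExpansion_of_hasSum_nome_pow {ι : Type*} {f : ℍ → ℂ} {e : ι → ℕ}
    (hf : ∀ τ : ℍ, HasSum (fun i ↦ nome τ ^ e i) (f τ)) :
    HasNomeExpansion f (PowerSeries.mk fun n ↦ ({i | e i = n}.ncard : ℂ)) := by
  have finite_fiber (n : ℕ) : Finite {i // e i = n} := by
    by_contra infinite
    rw [not_finite_iff_infinite] at infinite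
    have summable_const : Summable fun _ : {i // e i = n} ↦ nome UpperHalfPlane.I ^ n :=
      ((hf UpperHalfPlane.I).summable.comp_injective Subtype.val_injective).congr fun i ↦ by
        rw [Function.comp_apply, i.2]
    exact pow_ne_zero n (Complex.exp_ne_zero _) ((summable_const_iff _).mp summable_const)
  intro τ
  refine ((Equiv.sigmaFiberEquiv e).hasSum_iff.mpr (hf τ)).sigma fun n ↦ ?_
  have := finite_fiber n
  have := Fintype.ofFinite {i // e i = n}
  have summand_eq (i : {i // e i = n}) :
      ((fun i ↦ nome τ ^ e i) ∘ Equiv.sigmaFiberEquiv e) ⟨n, i⟩ = nome τ ^ n := by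
    rw [Function.comp_apply, Equiv.sigmaFiberEquiv_apply, i.2]
  convert hasSum_fintype _ using 1
  rw [Finset.sum_congr rfl fun i _ ↦ summand_eq i, Finset.sum_const, Finset.card_univ,
    nsmul_eq_mul, coeff_mk, ← Nat.card_eq_fintype_card]
  rfl

end NomeExpansions

section ThetaTriples

open UpperHalfPlane hiding I
open ModularGroup PowerSeries MatrixGroups

/-- `A`, `B`, `C` are permuted up to sign by `T` and by the weight `k` action of `S`, as are
`θ₃⁴`, `θ₄⁴`, `θ₂⁴` for `k = 2`. The theta series of an odd unimodular lattice in dimension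
`2k ≡ 4 mod 8`, its translate by `T`, and the theta series of the shadow form such a triple. -/
structure IsThetaTriple (k : ℕ) (A B C : ℍ → ℂ) : Prop where
  first_T : ∀ τ, A (T • τ) = B τ
  second_T : ∀ τ, B (T • τ) = A τ
  third_T : ∀ τ, C (T • τ) = -C τ
  first_S : ∀ τ : ℍ, A (S • τ) = -(τ : ℂ) ^ k * A τ
  second_S : ∀ τ : ℍ, B (S • τ) = -(τ : ℂ) ^ k * C τ
  third_S : ∀ τ : ℍ, C (S • τ) = -(τ : ℂ) ^ k * B τ

namespace IsThetaTriple

variable {A B C x y w : ℍ → ℂ} {φ χ ψ ξ η ω : ℂ⟦X⟧}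

lemma hasNomeExpansion_second {k : ℕ} (h : IsThetaTriple k A B C) (hA : HasNomeExpansion A φ) :
    HasNomeExpansion B (rescale (-1) φ) := by
  simpa only [h.first_T] using hA.comp_T_smul

section Invariants

variable {k m : ℕ} (h : IsThetaTriple k A B C) (h' : IsThetaTriple m x y w)
  (hA : HasNomeExpansion A φ) (hB : HasNomeExpansion B χ) (hC : HasNomeExpansion C ψ)
  (hx : HasNomeExpansion x ξ) (hy : HasNomeExpansion y η) (hw : HasNomeExpansion w ω)

include h h' hA hB hC hx hy hw

lemma exists_modularForm_quadratic :
    ∃ F : ModularForm 𝒮ℒ (k + 2 * m : ℕ), ∀ n, (qExpansion 1 F).coeff n =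
      (φ * ξ * (η - ω) + χ * η * (ξ + ω) - ψ * ω * (ξ + η)).coeff (2 * n) := by
  refine ((((hA.mul hx).mul (hy.sub hw)).add ((hB.mul hy).mul (hx.add hw))).sub
    ((hC.mul hw).mul (hx.add hy))).exists_modularForm (fun τ ↦ ?_) fun τ ↦ ?_
  · simp only [Pi.sub_apply, Pi.add_apply, Pi.mul_apply, h.first_T, h.second_T, h.third_T,
      h'.first_T, h'.second_T, h'.third_T]
    ring
  · simp only [Pi.sub_apply, Pi.add_apply, Pi.mul_apply, h.first_S, h.second_S, h.third_S,
      h'.first_S, h'.second_S, h'.third_S]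
    ring

lemma exists_modularForm_octic :
    ∃ F : ModularForm 𝒮ℒ (k + 8 * m : ℕ), ∀ n, (qExpansion 1 F).coeff n =
      (φ * ξ ^ 5 * η * ω * (η - ω) - χ * η ^ 5 * ξ * ω * (ξ + ω) +
        ψ * ω ^ 5 * ξ * η * (ξ + η)).coeff (2 * n) := by
  refine ((((((hA.mul (hx.pow 5)).mul hy).mul hw).mul (hy.sub hw)).sub
    ((((hB.mul (hy.pow 5)).mul hx).mul hw).mul (hx.add hw))).add
    ((((hC.mul (hw.pow 5)).mul hx).mul hy).mul (hx.add hy))).exists_modularForm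
      (fun τ ↦ ?_) fun τ ↦ ?_
  · simp only [Pi.sub_apply, Pi.add_apply, Pi.mul_apply, Pi.pow_apply, h.first_T, h.second_T,
      h.third_T, h'.first_T, h'.second_T, h'.third_T]
    ring
  · simp only [Pi.sub_apply, Pi.add_apply, Pi.mul_apply, Pi.pow_apply, h.first_S, h.second_S,
      h.third_S, h'.first_S, h'.second_S, h'.third_S]
    ring

end Invariants

section Relations

variable (h : IsThetaTriple 22 A B C) (h' : IsThetaTriple 2 x y w)
  (hA : HasNomeExpansion A φ) (hC : HasNomeExpansion C ψ)
  (hx : HasNomeExpansion x ξ) (hw : HasNomeExpansion w ω)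
  {a₄ a₅ a₆ c₁ c₃ c₅ : ℂ} (hφ : HasInitialCoeffs φ 1 0 0 0 a₄ a₅ a₆)
  (hψ : HasInitialCoeffs ψ 0 c₁ 0 c₃ 0 c₅ 0)
  (hξ : HasInitialCoeffs ξ 1 8 24 32 24 48 96) (hω : HasInitialCoeffs ω 0 16 0 64 0 96 0)

include h h' hA hC hx hw hφ hψ hξ hω

lemma coeff_four_relation : a₄ = 6600 + 16 * (c₃ + 76 * c₁) := by
  obtain ⟨F, hF⟩ := h.exists_modularForm_quadratic h' hA (h.hasNomeExpansion_second hA) hC hx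
    (h'.hasNomeExpansion_second hx) hw
  have hχ := hφ.rescale_neg_one
  have hη := hξ.rescale_neg_one
  have coeffs := (((hφ.mul hξ).mul (hη.sub hω)).add ((hχ.mul hη).mul (hξ.add hω))).sub
    ((hψ.mul hω).mul (hξ.add hη))
  have relation := weight_twentySix_coeff_relation F
  rw [hF 0, hF 1, hF 2, coeffs.coeff_zero, coeffs.coeff_two, coeffs.coeff_four] at relation
  linear_combination relation / 2

lemma coeff_five_relation : 8 * a₄ + a₅ + 65536 * c₁ = 863808 := by
  obtain ⟨F, hF⟩ := h.exists_modularForm_octic h' hA (h.hasNomeExpansion_second hA) hC hx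
    (h'.hasNomeExpansion_second hx) hw
  have hχ := hφ.rescale_neg_one
  have hη := hξ.rescale_neg_one
  have coeffs :=
    (((((hφ.mul (hξ.sq.sq.mul hξ)).mul hη).mul hω).mul (hη.sub hω)).sub
      ((((hχ.mul (hη.sq.sq.mul hη)).mul hξ).mul hω).mul (hξ.add hω))).add
      ((((hψ.mul (hω.sq.sq.mul hω)).mul hξ).mul hη).mul (hξ.add hη))
  simp only [← pow_mul, ← pow_succ] at coeffs
  have relation := weight_thirtyEight_coeff_relation F (by rw [hF 0, coeffs.coeff_zero]; ring)
  rw [hF 1, hF 2, hF 3, coeffs.coeff_two, coeffs.coeff_four, coeffs.coeff_six] at relation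
  linear_combination relation / 32

theorem coeff_relations :
    a₄ = 6600 + 16 * (c₃ + 76 * c₁) ∧ 8 * a₄ + a₅ + 65536 * c₁ = 863808 :=
  ⟨h.coeff_four_relation h' hA hC hx hw hφ hψ hξ hω,
    h.coeff_five_relation h' hA hC hx hw hφ hψ hξ hω⟩

end Relations

end IsThetaTriple

end ThetaTriples

section PoissonSummation

open MeasureTheory Function UnitAddTorus
open scoped Real

variable {ι : Type*}

/-- An integer vector, viewed as a point of `ℝ^ι`. -/
def intVec (m : ι → ℤ) : ι → ℝ := fun i ↦ m i

/-- The half-open unit cube with corner `a`, in the form used for integrals over the torus. -/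
def unitBox (a : ι → ℝ) : Set (ι → ℝ) := {x | ∀ i, x i ∈ Set.Ioc (a i) (a i + 1)}

/-- The projection of `ℝ^ι` onto `(ℝ / ℤ)^ι`. -/
def toUnitAddTorus : C(ι → ℝ, UnitAddTorus ι) where
  toFun x i := x i
  continuous_toFun := by fun_prop

lemma add_mem_unitBox_iff {x a : ι → ℝ} : x + a ∈ unitBox a ↔ x ∈ unitBox 0 := by
  refine forall_congr' fun i ↦ ?_
  rw [Pi.add_apply, Set.add_mem_Ioc_iff_left, sub_self, add_sub_cancel_left, Pi.zero_apply,
    zero_add]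

lemma existsUnique_mem_unitBox_intVec (x : ι → ℝ) : ∃! m : ι → ℤ, x ∈ unitBox (intVec m) := by
  have mem_iff (m : ι → ℤ) : x ∈ unitBox (intVec m) ↔ m = fun i ↦ ⌈x i⌉ - 1 := by
    rw [funext_iff]
    refine forall_congr' fun i ↦ ?_
    rw [eq_sub_iff_add_eq, eq_comm, Int.ceil_eq_iff, intVec, Set.mem_Ioc, Int.cast_add,
      Int.cast_one, add_sub_cancel_right]
  exact ⟨_, (mem_iff _).mpr rfl, fun m ↦ (mem_iff m).mp⟩

lemma toUnitAddTorus_add_intVec (x : ι → ℝ) (m : ι → ℤ) :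
    toUnitAddTorus (x + intVec m) = toUnitAddTorus x := by
  ext i
  simp [toUnitAddTorus, intVec]

lemma exists_eq_add_intVec {x y : ι → ℝ} (h : toUnitAddTorus x = toUnitAddTorus y) :
    ∃ m : ι → ℤ, y = x + intVec m := by
  have exists_coord (i : ι) : ∃ m : ℤ, y i = x i + m := by
    obtain ⟨m, hm⟩ := AddCircle.coe_eq_zero_iff 1 |>.mp
      (show ((y i - x i : ℝ) : UnitAddCircle) = 0 by
        rw [AddCircle.coe_sub, sub_eq_zero]
        exact (congr_fun h i).symm)
    exact ⟨m, by linear_combination -hm⟩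
  choose m hm using exists_coord
  exact ⟨m, funext hm⟩

lemma isOpenQuotientMap_toUnitAddTorus :
    IsOpenQuotientMap (toUnitAddTorus (ι := ι)) :=
  IsOpenQuotientMap.piMap fun _ ↦ QuotientAddGroup.isOpenQuotientMap_mk

lemma tsum_add_intVec_factorsThrough (f : (ι → ℝ) → ℂ) :
    FactorsThrough (fun x ↦ ∑' m : ι → ℤ, f (x + intVec m)) toUnitAddTorus := fun x y hxy ↦ by
  obtain ⟨m, rfl⟩ := exists_eq_add_intVec hxy
  have intVec_add (m' : ι → ℤ) : x + intVec m + intVec m' = x + intVec (m + m') := by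
    ext i
    simp [intVec, add_assoc]
  simp only [intVec_add]
  exact ((Equiv.addLeft m).tsum_eq fun m' ↦ f (x + intVec m')).symm

lemma measurableSet_unitBox [Countable ι] (a : ι → ℝ) : MeasurableSet (unitBox a) :=
  MeasurableSet.univ_pi' fun _ ↦ measurableSet_Ioc

variable [Fintype ι]

lemma hasSum_setIntegral_unitBox {E : Type*} [NormedAddCommGroup E] [NormedSpace ℝ E]
    {f : (ι → ℝ) → E} (hf : Integrable f) :
    HasSum (fun m : ι → ℤ ↦ ∫ x in unitBox 0, f (x + intVec m)) (∫ x, f x) := by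
  have iUnion_eq : ⋃ m : ι → ℤ, unitBox (intVec m) = Set.univ :=
    Set.iUnion_eq_univ_iff.mpr fun x ↦ (existsUnique_mem_unitBox_intVec x).exists
  have pairwise_disjoint : Pairwise (Disjoint on fun m : ι → ℤ ↦ unitBox (intVec m)) :=
    fun m m' hne ↦ Set.disjoint_left.mpr fun x hx hx' ↦
      hne ((existsUnique_mem_unitBox_intVec x).unique hx hx')
  have hasSum := hasSum_integral_iUnion (fun m ↦ measurableSet_unitBox (intVec m))
    pairwise_disjoint hf.integrableOn
  rw [iUnion_eq, setIntegral_univ] at hasSum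
  refine hasSum.congr_fun fun m ↦ ?_
  have preimage_eq : (· + intVec m) ⁻¹' unitBox (intVec m) = unitBox 0 :=
    Set.ext fun x ↦ add_mem_unitBox_iff
  rw [← preimage_eq]
  exact (measurePreserving_add_right volume (intVec m)).setIntegral_preimage_emb
    (measurableEmbedding_addRight _) f _

lemma setIntegral_unitBox_tsum {E : Type*} [NormedAddCommGroup E] [NormedSpace ℝ E]
    {f : (ι → ℝ) → E} (hf : Integrable f) :
    ∫ x in unitBox 0, ∑' m : ι → ℤ, f (x + intVec m) = ∫ x, f x := by
  rw [← (hasSum_setIntegral_unitBox hf).tsum_eq]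
  exact (integral_tsum_of_summable_integral_norm
    (fun m ↦ (hf.comp_add_right (intVec m)).integrableOn)
    (hasSum_setIntegral_unitBox hf.norm).summable).symm

lemma mFourier_toUnitAddTorus (k : ι → ℤ) (x : ι → ℝ) :
    mFourier k (toUnitAddTorus x) = Complex.exp (2 * π * Complex.I * ∑ i, (k i : ℂ) * x i) := by
  rw [Finset.mul_sum, Complex.exp_sum]
  refine Finset.prod_congr rfl fun i _ ↦ ?_
  refine fourier_coe_apply.trans ?_
  congr 1
  push_cast
  ring

/-- The translates of `f` by integer vectors are dominated by a summable family, uniformly on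
bounded sets. -/
def HasSummableTranslates (f : (ι → ℝ) → ℂ) : Prop :=
  ∀ R : ℝ, ∃ u : (ι → ℤ) → ℝ, Summable u ∧ ∀ m x, ‖x‖ ≤ R → ‖f (x + intVec m)‖ ≤ u m

lemma HasSummableTranslates.continuous_tsum {f : (ι → ℝ) → ℂ} (hf : HasSummableTranslates f)
    (f_cont : Continuous f) : Continuous fun x ↦ ∑' m : ι → ℤ, f (x + intVec m) := by
  refine continuous_iff_continuousAt.mpr fun x ↦ ?_
  obtain ⟨u, u_summable, norm_le⟩ := hf (‖x‖ + 1)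
  have continuousOn : ContinuousOn (fun x ↦ ∑' m : ι → ℤ, f (x + intVec m))
      (Metric.ball 0 (‖x‖ + 1)) :=
    continuousOn_tsum (fun m ↦ (f_cont.comp (continuous_add_const _)).continuousOn) u_summable
      fun m y hy ↦ norm_le m y (mem_ball_zero_iff.mp hy).le
  exact continuousOn.continuousAt (Metric.isOpen_ball.mem_nhds (by simp))

/-- The periodization of `f`, as a continuous function on the torus. -/
def HasSummableTranslates.periodization {f : (ι → ℝ) → ℂ} (hf : HasSummableTranslates f)
    (f_cont : Continuous f) : C(UnitAddTorus ι, ℂ) :=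
  isOpenQuotientMap_toUnitAddTorus.isQuotientMap.lift ⟨_, hf.continuous_tsum f_cont⟩
    (tsum_add_intVec_factorsThrough f)

lemma HasSummableTranslates.periodization_apply {f : (ι → ℝ) → ℂ} (hf : HasSummableTranslates f)
    (f_cont : Continuous f) (x : ι → ℝ) :
    hf.periodization f_cont (toUnitAddTorus x) = ∑' m : ι → ℤ, f (x + intVec m) :=
  DFunLike.congr_fun (isOpenQuotientMap_toUnitAddTorus.isQuotientMap.lift_comp
    ⟨_, hf.continuous_tsum f_cont⟩ (tsum_add_intVec_factorsThrough f)) x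

lemma HasSummableTranslates.mFourierCoeff_periodization {f : (ι → ℝ) → ℂ}
    (hf : HasSummableTranslates f) (f_cont : Continuous f) (f_int : Integrable f) (k : ι → ℤ) :
    mFourierCoeff (hf.periodization f_cont) k =
      ∫ x, mFourier (-k) (toUnitAddTorus x) * f x := by
  have integrable : Integrable fun x ↦ mFourier (-k) (toUnitAddTorus x) * f x := by
    refine f_int.bdd_mul (c := 1) ?_ ?_
    · exact ((mFourier (-k)).comp toUnitAddTorus).continuous.aestronglyMeasurable
    · exact .of_forall fun x ↦ ((mFourier (-k)).norm_coe_le_norm _).trans_eq mFourier_norm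
  rw [← setIntegral_unitBox_tsum integrable, mFourierCoeff_eq_integral _ _ 0]
  refine setIntegral_congr_fun (measurableSet_unitBox 0) fun x _ ↦ ?_
  simp only [toUnitAddTorus_add_intVec, tsum_mul_left, ← hf.periodization_apply f_cont]
  rfl

theorem HasSummableTranslates.tsum_eq_tsum_integral {f : (ι → ℝ) → ℂ}
    (hf : HasSummableTranslates f) (f_cont : Continuous f) (f_int : Integrable f)
    (summable : Summable fun k : ι → ℤ ↦ ∫ x, mFourier (-k) (toUnitAddTorus x) * f x)
    (s : ι → ℝ) :
    ∑' m : ι → ℤ, f (s + intVec m) = ∑' k : ι → ℤ,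
      (∫ x, mFourier (-k) (toUnitAddTorus x) * f x) * mFourier k (toUnitAddTorus s) := by
  have coeff_eq := hf.mFourierCoeff_periodization f_cont f_int
  have hasSum := hasSum_mFourier_series_apply_of_summable (f := hf.periodization f_cont)
    (summable.congr fun k ↦ (coeff_eq k).symm) (toUnitAddTorus s)
  simp only [coeff_eq, hf.periodization_apply, smul_eq_mul] at hasSum
  exact hasSum.tsum_eq.symm

end PoissonSummation

section GaussianSums

open UpperHalfPlane hiding I
open MeasureTheory Module ModularGroup Submodule
open scoped Real

lemma coe_T_smul (τ : ℍ) : ((T • τ : ℍ) : ℂ) = τ + 1 := by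
  rw [modular_T_smul, coe_vadd, Complex.ofReal_one, add_comm]

lemma coe_S_smul (τ : ℍ) : ((S • τ : ℍ) : ℂ) = -1 / τ := by
  rw [modular_S_smul, coe_mk, inv_neg, neg_div, one_div]

lemma S_smul_S_smul (τ : ℍ) : S • S • τ = τ := by
  ext1
  rw [coe_S_smul, coe_S_smul, div_div_eq_mul_div, neg_one_mul, neg_div_neg_eq, div_one]

variable {V : Type*} [NormedAddCommGroup V]

/-- The Gaussian function `v ↦ exp (π i τ ‖v‖²)`, whose lattice sums are theta series. -/
def gaussian (τ : ℍ) (v : V) : ℂ := Complex.exp (π * Complex.I * τ * ‖v‖ ^ 2)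

lemma norm_gaussian (τ : ℍ) (v : V) : ‖gaussian τ v‖ = Real.exp (-(π * τ.im) * ‖v‖ ^ 2) := by
  rw [gaussian, Complex.norm_exp, ← Complex.ofReal_pow, Complex.re_mul_ofReal, mul_assoc,
    Complex.re_ofReal_mul, Complex.I_mul_re, coe_im, mul_neg]

lemma gaussian_S_smul (τ : ℍ) (v : V) :
    gaussian (S • τ) v = Complex.exp (-(π * Complex.I / τ) * ‖v‖ ^ 2) := by
  rw [gaussian, coe_S_smul]
  ring_nf

lemma re_pi_mul_I_div_pos (τ : ℍ) : 0 < (π * Complex.I / τ : ℂ).re := by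
  have eq : (π * Complex.I / τ : ℂ) = π * -((S • τ : ℍ) * Complex.I) := by
    rw [coe_S_smul]
    ring
  rw [eq, Complex.re_ofReal_mul, Complex.neg_re, Complex.mul_I_re, neg_neg, coe_im]
  exact mul_pos Real.pi_pos (S • τ).im_pos

lemma continuous_gaussian (τ : ℍ) : Continuous fun v : V ↦ gaussian τ v := by
  unfold gaussian
  fun_prop

lemma half_norm_sq_sub_norm_sq_le (x v : V) : ‖v‖ ^ 2 / 2 - ‖x‖ ^ 2 ≤ ‖x + v‖ ^ 2 := by
  have norm_le : ‖v‖ ≤ ‖x + v‖ + ‖x‖ := by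
    simpa using norm_sub_le (x + v) x
  nlinarith [norm_nonneg v, sq_nonneg (‖x + v‖ - ‖x‖)]

lemma norm_gaussian_add_le (τ : ℍ) (x v : V) :
    ‖gaussian τ (x + v)‖ ≤
      Real.exp (π * τ.im * ‖x‖ ^ 2) * Real.exp (-(π * τ.im / 2) * ‖v‖ ^ 2) := by
  rw [norm_gaussian, ← Real.exp_add, Real.exp_le_exp]
  linear_combination π * τ.im * half_norm_sq_sub_norm_sq_le x v

section NormedSpace

variable [NormedSpace ℝ V] {ι : Type*} [Fintype ι]

/-- The enumeration of the lattice spanned by `b` by integer coordinates. -/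
def spanEquiv (b : Basis ι ℝ V) : (ι → ℤ) ≃ₗ[ℤ] span ℤ (Set.range b) :=
  (b.restrictScalars ℤ).equivFun.symm

lemma coe_spanEquiv (b : Basis ι ℝ V) (m : ι → ℤ) :
    (spanEquiv b m : V) = b.equivFunL.symm (intVec m) := by
  change _ = b.equivFun.symm (intVec m)
  simp [spanEquiv, intVec, Basis.equivFun_symm_apply, Int.cast_smul_eq_zsmul]

variable [FiniteDimensional ℝ V]

section DiscreteSubmodule

variable (Λ : Submodule ℤ V) [DiscreteTopology Λ]

lemma summable_exp_neg_mul_norm_sq {c : ℝ} (hc : 0 < c) :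
    Summable fun v : Λ ↦ Real.exp (-c * ‖(v : V)‖ ^ 2) := by
  let d := finrank ℤ Λ + 1
  have summable : Summable fun v : Λ ↦ (d.factorial / c ^ d : ℝ) * ‖v‖⁻¹ ^ (2 * d) :=
    (ZLattice.summable_norm_pow_inv Λ (2 * d) (by omega)).mul_left _
  refine summable.of_norm_bounded_eventually ?_
  filter_upwards [(Set.finite_singleton (0 : Λ)).compl_mem_cofinite] with v hv
  have : 0 < ‖v‖ := norm_pos_iff.mpr hv
  have pow_le := Real.pow_div_factorial_le_exp (c * ‖v‖ ^ 2) (by positivity) d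
  calc ‖Real.exp (-c * ‖(v : V)‖ ^ 2)‖ = (Real.exp (c * ‖v‖ ^ 2))⁻¹ := by
        rw [Real.norm_of_nonneg (Real.exp_nonneg _), neg_mul, Real.exp_neg, coe_norm]
    _ ≤ ((c * ‖v‖ ^ 2) ^ d / d.factorial)⁻¹ := inv_anti₀ (by positivity) pow_le
    _ = d.factorial / c ^ d * ‖v‖⁻¹ ^ (2 * d) := by
        rw [inv_div, mul_pow, ← pow_mul, inv_pow, div_mul_eq_div_div, div_eq_mul_inv _ (‖v‖ ^ _)]

lemma summable_gaussian_add (τ : ℍ) (s : V) : Summable fun v : Λ ↦ gaussian τ (s + v) :=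
  .of_norm_bounded
    ((summable_exp_neg_mul_norm_sq Λ (half_pos (mul_pos Real.pi_pos τ.im_pos))).mul_left _)
    fun v ↦ norm_gaussian_add_le τ s v

lemma summable_gaussian (τ : ℍ) : Summable fun v : Λ ↦ gaussian τ (v : V) := by
  simpa only [zero_add] using summable_gaussian_add Λ τ 0

end DiscreteSubmodule

lemma hasSummableTranslates_gaussian (b : Basis ι ℝ V) (τ : ℍ) :
    HasSummableTranslates fun x ↦ gaussian τ (b.equivFunL.symm x) := by
  intro R
  let K : ℝ := ‖(b.equivFunL.symm : (ι → ℝ) →L[ℝ] V)‖ * R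
  have summable := (spanEquiv b).toEquiv.summable_iff.mpr
    (summable_exp_neg_mul_norm_sq (span ℤ (Set.range b)) (half_pos (mul_pos Real.pi_pos τ.im_pos)))
  refine ⟨_, summable.mul_left (Real.exp (π * τ.im * K ^ 2)), fun m x hx ↦ ?_⟩
  simp only [map_add, Function.comp_apply, LinearEquiv.coe_toEquiv, coe_spanEquiv]
  refine (norm_gaussian_add_le τ _ _).trans ?_
  have norm_le : ‖b.equivFunL.symm x‖ ≤ K :=
    (b.equivFunL.symm : (ι → ℝ) →L[ℝ] V).le_opNorm_of_le hx
  have := τ.im_pos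
  gcongr

lemma exists_map_equivFunL_symm_volume_eq (b : Basis ι ℝ V) [MeasurableSpace V] [BorelSpace V]
    (μ : Measure V) [μ.IsAddHaarMeasure] :
    ∃ c : NNReal, (volume : Measure (ι → ℝ)).map b.equivFunL.symm = c • μ :=
  have := b.equivFunL.symm.isAddHaarMeasure_map (volume : Measure (ι → ℝ))
  ⟨_, Measure.isAddLeftInvariant_eq_smul _ _⟩

end NormedSpace

variable [InnerProductSpace ℝ V] {ι : Type*} [Fintype ι] [DecidableEq ι] {b b' : Basis ι ℝ V}

lemma inner_equivFunL_symm (h : ∀ i j, ⟪b' i, b j⟫ = if j = i then 1 else 0) (x y : ι → ℝ) :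
    ⟪b'.equivFunL.symm x, b.equivFunL.symm y⟫ = ∑ i, x i * y i := by
  change ⟪b'.equivFun.symm x, b.equivFun.symm y⟫ = _
  simp [Basis.equivFun_symm_apply, sum_inner, inner_sum, inner_smul_left, inner_smul_right, h,
    mul_comm]

lemma mFourier_toUnitAddTorus_eq (h : ∀ i j, ⟪b' i, b j⟫ = if j = i then 1 else 0) (k : ι → ℤ)
    (x : ι → ℝ) : UnitAddTorus.mFourier k (toUnitAddTorus x) =
      Complex.exp (2 * π * Complex.I * ⟪(spanEquiv b' k : V), b.equivFunL.symm x⟫) := by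
  rw [mFourier_toUnitAddTorus, coe_spanEquiv, inner_equivFunL_symm h]
  push_cast
  rfl

variable [FiniteDimensional ℝ V] [MeasurableSpace V] [BorelSpace V]

lemma integral_exp_mul_gaussian_S_smul (τ : ℍ) (w : V) :
    ∫ v : V, Complex.exp (-(2 * π * Complex.I * ⟪w, v⟫)) * gaussian (S • τ) v =
      (-Complex.I * τ) ^ (finrank ℝ V / 2 : ℂ) * gaussian τ w := by
  have pi_ne_zero : (π : ℂ) ≠ 0 := Complex.ofReal_ne_zero.mpr Real.pi_ne_zero
  have τ_ne_zero : (τ : ℂ) ≠ 0 := τ.ne_zero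
  have integrand_eq (v : V) :
      Complex.exp (-(2 * π * Complex.I * ⟪w, v⟫)) * gaussian (S • τ) v =
        Complex.exp (-(π * Complex.I / τ) * ‖v‖ ^ 2 + -(2 * π * Complex.I) * ⟪w, v⟫) := by
    rw [gaussian_S_smul, ← Complex.exp_add]
    ring_nf
  simp only [integrand_eq]
  rw [GaussianFourier.integral_cexp_neg_mul_sq_norm_add (re_pi_mul_I_div_pos τ), gaussian]
  congr 2
  · rw [div_div_eq_mul_div, mul_div_mul_left _ _ pi_ne_zero, Complex.div_I]
    ring
  · field_simp
    ring

lemma integrable_gaussian_S_smul (τ : ℍ) : Integrable fun v : V ↦ gaussian (S • τ) v := by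
  simpa only [gaussian_S_smul, zero_mul, add_zero] using
    GaussianFourier.integrable_cexp_neg_mul_sq_norm_add (re_pi_mul_I_div_pos τ) 0 (0 : V)

omit [Fintype ι] in
/-- The constant `c` is the inverse of the covolume of the lattice spanned by `b`. -/
theorem exists_tsum_gaussian_S_smul [Finite ι] (h : ∀ i j, ⟪b' i, b j⟫ = if j = i then 1 else 0) :
    ∃ c : ℂ, ∀ (τ : ℍ) (s : V),
      ∑' v : span ℤ (Set.range b), gaussian (S • τ) (s + v) =
        c * (-Complex.I * τ) ^ (finrank ℝ V / 2 : ℂ) * ∑' v : span ℤ (Set.range b'),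
          gaussian τ (v : V) * Complex.exp (2 * π * Complex.I * ⟪(v : V), s⟫) := by
  have := Fintype.ofFinite ι
  obtain ⟨c, map_volume⟩ := exists_map_equivFunL_symm_volume_eq b volume
  have embedding : MeasurableEmbedding b.equivFunL.symm :=
    b.equivFunL.symm.toHomeomorph.measurableEmbedding
  refine ⟨(c : ℝ), fun τ s ↦ ?_⟩
  set a : ℂ := (c : ℝ) * (-Complex.I * τ) ^ (finrank ℝ V / 2 : ℂ) with a_def
  have f_cont : Continuous fun x ↦ gaussian (S • τ) (b.equivFunL.symm x) :=
    (continuous_gaussian _).comp b.equivFunL.symm.continuous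
  have f_int : Integrable fun x ↦ gaussian (S • τ) (b.equivFunL.symm x) := by
    have integrable := (integrable_gaussian_S_smul (V := V) τ).smul_measure_nnreal (c := c)
    rw [← map_volume] at integrable
    exact embedding.integrable_map_iff.mp integrable
  have fourier_eq (k : ι → ℤ) : ∫ x, UnitAddTorus.mFourier (-k) (toUnitAddTorus x) *
      gaussian (S • τ) (b.equivFunL.symm x) = a * gaussian τ (spanEquiv b' k : V) := by
    rw [a_def, mul_assoc, ← integral_exp_mul_gaussian_S_smul, ← Complex.real_smul,
      ← NNReal.smul_def, ← integral_smul_nnreal_measure, ← map_volume, embedding.integral_map]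
    refine integral_congr_ae (.of_forall fun x ↦ ?_)
    simp only [mFourier_toUnitAddTorus_eq h, map_neg, NegMemClass.coe_neg,
      inner_neg_left, Complex.ofReal_neg, mul_neg]
  have summable := ((spanEquiv b').toEquiv.summable_iff.mpr (summable_gaussian _ τ)).mul_left a
  have poisson := (hasSummableTranslates_gaussian b (S • τ)).tsum_eq_tsum_integral f_cont f_int
    (summable.congr fun k ↦ (fourier_eq k).symm) (b.equivFunL s)
  simp_rw [fourier_eq, mul_assoc a, tsum_mul_left, mFourier_toUnitAddTorus_eq h, map_add,
    b.equivFunL.symm_apply_apply, ← coe_spanEquiv] at poisson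
  rw [← (spanEquiv b).toEquiv.tsum_eq, ← (spanEquiv b').toEquiv.tsum_eq]
  exact poisson

end GaussianSums

section UnimodularLattices

open UpperHalfPlane hiding I
open Module ModularGroup Submodule
open scoped Real

variable {n : ℕ}

/-- The dual `M*` of a set of vectors, as a lattice. -/
def dualLattice (M : Set (EuclideanSpace ℝ (Fin n))) : Submodule ℤ (EuclideanSpace ℝ (Fin n)) where
  carrier := dualSet M
  zero_mem' y _ := ⟨0, by rw [inner_zero_left, Int.cast_zero]⟩
  add_mem' := by
    intro u v hu hv y hy
    obtain ⟨a, ha⟩ := hu y hy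
    obtain ⟨b, hb⟩ := hv y hy
    exact ⟨a + b, by rw [inner_add_left, ha, hb, Int.cast_add]⟩
  smul_mem' := by
    intro c v hv y hy
    obtain ⟨a, ha⟩ := hv y hy
    exact ⟨c * a, by rw [← Int.cast_smul_eq_zsmul ℝ, real_inner_smul_left, ha, Int.cast_mul]⟩

lemma nondegenerate_innerₗ {V : Type*} [NormedAddCommGroup V] [InnerProductSpace ℝ V] :
    (innerₗ V).Nondegenerate :=
  ⟨fun v hv ↦ inner_self_eq_zero.mp (hv v), fun v hv ↦ inner_self_eq_zero.mp (hv v)⟩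

/-- `s` is half a characteristic vector of `L`: `(x, x) ≡ 2 (x, s) mod 2` for all `x ∈ L`. -/
def IsHalfCharacteristic (L : Set (EuclideanSpace ℝ (Fin n))) (s : EuclideanSpace ℝ (Fin n)) :
    Prop :=
  ∀ x ∈ L, ∃ j : ℤ, normOf x = 2 * (⟪x, s⟫ + j)

namespace IsUnimodularLattice

variable {L : Set (EuclideanSpace ℝ (Fin n))} (hL : IsUnimodularLattice L)

include hL

lemma mem_iff {v : EuclideanSpace ℝ (Fin n)} : v ∈ L ↔ ∀ y ∈ L, ∃ m : ℤ, ⟪v, y⟫ = m :=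
  Set.ext_iff.mp hL v

lemma exists_inner_eq {x y : EuclideanSpace ℝ (Fin n)} (hx : x ∈ L) (hy : y ∈ L) :
    ∃ m : ℤ, ⟪x, y⟫ = m :=
  hL.mem_iff.mp hx y hy

/-- A unimodular lattice, as a submodule. -/
def toSubmodule : Submodule ℤ (EuclideanSpace ℝ (Fin n)) :=
  (dualLattice L).copy L hL

lemma span_real_eq_top : span ℝ L = ⊤ := by
  rw [← orthogonal_eq_bot_iff, eq_bot_iff]
  intro v hv
  have inner_eq_zero (y) (hy : y ∈ L) : ⟪v, y⟫ = 0 :=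
    inner_left_of_mem_orthogonal (subset_span hy) hv
  have v_mem : v ∈ L := hL.mem_iff.mpr fun y hy ↦ ⟨0, by rw [inner_eq_zero y hy, Int.cast_zero]⟩
  exact inner_self_eq_zero.mp (inner_eq_zero v v_mem)

lemma discreteTopology : DiscreteTopology hL.toSubmodule := by
  classical
  let b := Basis.ofSpan hL.span_real_eq_top.ge
  have := FiniteDimensional.fintypeBasisIndex b
  let Λ := span ℤ (Set.range (LinearMap.BilinForm.dualBasis (innerₗ _) nondegenerate_innerₗ b))
  have subset : (hL.toSubmodule : Set (EuclideanSpace ℝ (Fin n))) ⊆ Λ := by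
    intro x hx
    refine (Basis.mem_span_iff_repr_mem ℤ _ x).mpr fun i ↦ ?_
    obtain ⟨m, hm⟩ := hL.exists_inner_eq hx (Basis.ofSpan_subset _ ⟨i, rfl⟩ : b i ∈ L)
    exact ⟨m, by rw [LinearMap.BilinForm.dualBasis_repr_apply, innerₗ_apply_apply, hm]; rfl⟩
  exact DiscreteTopology.of_subset (inferInstanceAs (DiscreteTopology Λ)) subset

lemma dualSubmodule_toSubmodule :
    LinearMap.BilinForm.dualSubmodule (innerₗ _) hL.toSubmodule = hL.toSubmodule := by
  ext v
  simp only [LinearMap.BilinForm.mem_dualSubmodule, mem_one, innerₗ_apply_apply, eq_intCast,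
    eq_comm (b := ⟪v, _⟫)]
  exact hL.mem_iff.symm

lemma exists_dual_bases : ∃ b b' : Basis (Fin n) ℝ (EuclideanSpace ℝ (Fin n)),
    (∀ i j, ⟪b' i, b j⟫ = if j = i then (1 : ℝ) else 0) ∧
      span ℤ (Set.range b) = hL.toSubmodule ∧ span ℤ (Set.range b') = hL.toSubmodule := by
  have := hL.discreteTopology
  have : IsZLattice ℝ hL.toSubmodule := ⟨hL.span_real_eq_top⟩
  have := ZLattice.module_free ℝ hL.toSubmodule
  have := ZLattice.module_finite ℝ hL.toSubmodule
  have finrank_eq : finrank ℤ hL.toSubmodule = n := by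
    rw [ZLattice.rank ℝ, finrank_euclideanSpace_fin]
  let b := (finBasisOfFinrankEq ℤ _ finrank_eq).ofZLatticeBasis ℝ hL.toSubmodule
  have span_b : span ℤ (Set.range b) = hL.toSubmodule := Basis.ofZLatticeBasis_span ℝ ..
  refine ⟨b, LinearMap.BilinForm.dualBasis (innerₗ _) nondegenerate_innerₗ b,
    LinearMap.BilinForm.apply_dualBasis_left (B := innerₗ _) _ b, span_b, ?_⟩
  rw [← LinearMap.BilinForm.dualSubmodule_span_of_basis, span_b, hL.dualSubmodule_toSubmodule]

lemma exists_isHalfCharacteristic : ∃ s, IsHalfCharacteristic L s := by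
  obtain ⟨b, b', inner_eq, span_b, -⟩ := hL.exists_dual_bases
  let s := ∑ i, (normOf (b i) / 2) • b' i
  have inner_s (j : Fin n) : ⟪b j, s⟫ = normOf (b j) / 2 := by
    rw [real_inner_comm]
    simp [s, sum_inner, real_inner_smul_left, inner_eq]
  refine ⟨s, fun x hx ↦ ?_⟩
  replace hx : x ∈ span ℤ (Set.range b) := span_b ▸ hx
  induction hx using span_induction with
  | mem x hx =>
    obtain ⟨i, rfl⟩ := hx
    exact ⟨0, by rw [inner_s]; ring⟩
  | zero => exact ⟨0, by simp [normOf]⟩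
  | add x y hx hy ihx ihy =>
    obtain ⟨i, hi⟩ := ihx
    obtain ⟨j, hj⟩ := ihy
    obtain ⟨m, hm⟩ := hL.exists_inner_eq (span_b ▸ hx : x ∈ hL.toSubmodule)
      (span_b ▸ hy : y ∈ hL.toSubmodule)
    refine ⟨i + j + m, ?_⟩
    rw [normOf] at hi hj ⊢
    rw [real_inner_add_add_self, inner_add_left, hi, hj, hm]
    push_cast
    ring
  | smul c x hx ih =>
    obtain ⟨j, hj⟩ := ih
    obtain ⟨m, hm⟩ := hL.exists_inner_eq (span_b ▸ hx : x ∈ hL.toSubmodule)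
      (span_b ▸ hx : x ∈ hL.toSubmodule)
    obtain ⟨r, hr⟩ := Int.even_mul_pred_self c
    replace hr : (c : ℝ) * (c - 1) = r + r := mod_cast hr
    refine ⟨r * m + c * j, ?_⟩
    rw [normOf] at hj ⊢
    rw [← Int.cast_smul_eq_zsmul ℝ, real_inner_smul_left, real_inner_smul_right,
      real_inner_smul_left]
    push_cast
    linear_combination ⟪x, x⟫ * hr + c * hj + 2 * r * hm

lemma mem_evenSublattice_or_odd {y : EuclideanSpace ℝ (Fin n)} (hy : y ∈ L) :
    y ∈ evenSublattice L ∨ ∃ m : ℤ, Odd m ∧ normOf y = m := by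
  obtain ⟨m, hm⟩ := hL.exists_inner_eq hy hy
  rcases Int.even_or_odd m with ⟨k, rfl⟩ | m_odd
  · exact .inl ⟨hy, k, by rw [normOf, hm]; push_cast; ring⟩
  · exact .inr ⟨m, m_odd, hm⟩

lemma add_mem_evenSublattice {x y : EuclideanSpace ℝ (Fin n)} {a b : ℤ} (hx : x ∈ L) (hy : y ∈ L)
    (ha : Odd a) (hb : Odd b) (hxa : normOf x = a) (hyb : normOf y = b) :
    x + y ∈ evenSublattice L := by
  obtain ⟨m, hm⟩ := hL.exists_inner_eq hx hy
  obtain ⟨c, hc⟩ := ha.add_odd hb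
  replace hc : (a : ℝ) + b = c + c := mod_cast hc
  refine ⟨hL.toSubmodule.add_mem hx hy, m + c, ?_⟩
  rw [normOf] at hxa hyb ⊢
  rw [real_inner_add_add_self, hxa, hyb, hm]
  push_cast
  linear_combination hc

section Odd

variable {x : EuclideanSpace ℝ (Fin n)} {a : ℤ} (hx : x ∈ L) (ha : Odd a) (hxa : normOf x = a)

include hx ha hxa

/-- `L₀* / L` has order two, and is detected by the pairing with any vector of odd norm. -/
lemma mem_of_mem_dualSet_evenSublattice {u : EuclideanSpace ℝ (Fin n)} {m : ℤ}
    (hu : u ∈ dualSet (evenSublattice L)) (hux : ⟪u, x⟫ = m) : u ∈ L := by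
  refine hL.mem_iff.mpr fun y hy ↦ ?_
  rcases hL.mem_evenSublattice_or_odd hy with y_mem | ⟨b, hb, hyb⟩
  · exact hu y y_mem
  · obtain ⟨k, hk⟩ := hu _ (hL.add_mem_evenSublattice hx hy ha hb hxa hyb)
    refine ⟨k - m, ?_⟩
    rw [inner_add_right, hux] at hk
    push_cast
    linear_combination hk

lemma exists_inner_eq_add_half {u : EuclideanSpace ℝ (Fin n)} (hu : u ∈ shadow L) :
    ∃ m : ℤ, ⟪u, x⟫ = m + 1 / 2 := by
  obtain ⟨k, hk⟩ := hu.1 _ (hL.add_mem_evenSublattice hx hx ha ha hxa hxa)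
  rw [inner_add_right] at hk
  rcases Int.even_or_odd' k with ⟨m, rfl | rfl⟩
  · refine absurd (hL.mem_of_mem_dualSet_evenSublattice hx ha hxa hu.1 (m := m) ?_) hu.2
    push_cast at hk
    linear_combination hk / 2
  · refine ⟨m, ?_⟩
    push_cast at hk
    linear_combination hk / 2

end Odd

theorem mem_shadow_iff {s v : EuclideanSpace ℝ (Fin n)} (hodd : IsOddLattice L)
    (hs : IsHalfCharacteristic L s) : v ∈ shadow L ↔ v - s ∈ L := by
  obtain ⟨x, hx, a, ha, hxa⟩ := hodd
  have s_mem : s ∈ shadow L := by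
    refine ⟨fun y hy ↦ ?_, fun s_mem ↦ ?_⟩
    · obtain ⟨m, hm⟩ := hy.2
      obtain ⟨j, hj⟩ := hs y hy.1
      exact ⟨m - j, by rw [real_inner_comm]; push_cast; linear_combination (hm - hj) / 2⟩
    · obtain ⟨m, hm⟩ := hL.exists_inner_eq hx s_mem
      obtain ⟨j, hj⟩ := hs x hx
      rw [hxa, hm] at hj
      have a_eq : a = 2 * (m + j) := mod_cast hj
      exact Int.not_even_iff_odd.mpr ha (a_eq ▸ even_two_mul _)
  obtain ⟨k, hk⟩ := hL.exists_inner_eq_add_half hx ha hxa s_mem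
  refine ⟨fun v_mem ↦ ?_, fun sub_mem ↦ ⟨?_, fun v_mem ↦ ?_⟩⟩
  · obtain ⟨m, hm⟩ := hL.exists_inner_eq_add_half hx ha hxa v_mem
    refine hL.mem_of_mem_dualSet_evenSublattice hx ha hxa (m := m - k)
      ((dualLattice _).sub_mem v_mem.1 s_mem.1) ?_
    rw [inner_sub_left, hm, hk]
    push_cast
    ring
  · have sub_mem' : v - s ∈ dualLattice (evenSublattice L) :=
      fun y hy ↦ hL.exists_inner_eq sub_mem hy.1
    have add_mem := (dualLattice _).add_mem sub_mem' s_mem.1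
    rwa [sub_add_cancel] at add_mem
  · refine s_mem.2 ?_
    have mem : v - (v - s) ∈ hL.toSubmodule := hL.toSubmodule.sub_mem v_mem sub_mem
    rwa [sub_sub_cancel] at mem

end IsUnimodularLattice

end UnimodularLattices

section ThetaSeries

open UpperHalfPlane hiding I
open Module ModularGroup Submodule
open scoped Real

lemma coe_T_smul_ne_zero (τ : ℍ) : (τ : ℂ) + 1 ≠ 0 :=
  coe_T_smul τ ▸ (T • τ).ne_zero

lemma coe_S_smul_T_smul_S_smul_T_smul (τ : ℍ) :
    ((S • T • S • T • τ : ℍ) : ℂ) = -((τ + 1) / τ) := by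
  have add_one_ne_zero := coe_T_smul_ne_zero τ
  have T_S_T : (-1 / (τ + 1) + 1 : ℂ) = τ / (τ + 1) := by
    field_simp
    ring
  simp only [coe_T_smul, coe_S_smul]
  rw [T_S_T, div_div_eq_mul_div, neg_one_mul, neg_div]

lemma T_smul_T_smul_S_smul_T_smul_S_smul_T_smul (τ : ℍ) :
    T • T • S • T • S • T • τ = T • S • τ := by
  have ne_zero : (τ : ℂ) ≠ 0 := τ.ne_zero
  ext1
  rw [coe_T_smul, coe_T_smul, coe_S_smul_T_smul_S_smul_T_smul, coe_T_smul, coe_S_smul]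
  field_simp
  ring

/-- Two of the six transformation laws of a theta triple, together with `A (τ + 2) = A τ`,
imply the others by the relation `(S T) ^ 3 = 1`. -/
theorem isThetaTriple_of_S_smul {k : ℕ} {A C : ℍ → ℂ} (hk : Even k)
    (A_T_T : ∀ τ, A (T • T • τ) = A τ) (A_S : ∀ τ : ℍ, A (S • τ) = -(τ : ℂ) ^ k * A τ)
    (C_S : ∀ τ : ℍ, C (S • τ) = -(τ : ℂ) ^ k * A (T • τ)) :
    IsThetaTriple k A (fun τ ↦ A (T • τ)) C := by
  have C_eq (τ : ℍ) : C τ = -((τ : ℂ) ^ k)⁻¹ * A (T • S • τ) := by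
    rw [← S_smul_S_smul τ, C_S, S_smul_S_smul, coe_S_smul, neg_div, hk.neg_pow, one_div, inv_pow]
  refine ⟨fun _ ↦ rfl, A_T_T, fun τ ↦ ?_, A_S, fun τ ↦ ?_, C_S⟩
  · have ne_zero : (τ : ℂ) ≠ 0 := τ.ne_zero
    have add_one_ne_zero := coe_T_smul_ne_zero τ
    have A_eq := A_S (S • T • S • T • τ)
    rw [S_smul_S_smul, ← A_T_T (S • T • S • T • τ), T_smul_T_smul_S_smul_T_smul_S_smul_T_smul,
      coe_S_smul_T_smul_S_smul_T_smul, hk.neg_pow, div_pow] at A_eq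
    rw [C_eq, C_eq, A_eq, coe_T_smul]
    field_simp
  · rw [C_eq, ← mul_assoc, neg_mul_neg, mul_inv_cancel₀ (pow_ne_zero k τ.ne_zero), one_mul]

section Series

variable {V : Type*} [NormedAddCommGroup V]

/-- The theta series `∑ v ∈ M, exp (π i τ ‖v‖²)` of a set of vectors. -/
def thetaSeries (M : Set V) (τ : ℍ) : ℂ := ∑' v : M, gaussian τ (v : V)

lemma gaussian_T_smul (τ : ℍ) (v : V) :
    gaussian (T • τ) v = gaussian τ v * Complex.exp (π * Complex.I * ‖v‖ ^ 2) := by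
  rw [gaussian, gaussian, coe_T_smul, ← Complex.exp_add]
  ring_nf

lemma gaussian_I (v : V) : gaussian UpperHalfPlane.I v = (Real.exp (-π * ‖v‖ ^ 2) : ℝ) := by
  rw [gaussian, coe_I, mul_assoc (π : ℂ), Complex.I_mul_I]
  push_cast
  ring_nf

end Series

lemma S_smul_I : S • UpperHalfPlane.I = UpperHalfPlane.I := by
  ext1
  rw [coe_S_smul, coe_I, div_eq_iff Complex.I_ne_zero, Complex.I_mul_I]

lemma neg_I_mul_cpow {n k : ℕ} (hn : n = 2 * k) (hk : k % 4 = 2) (z : ℂ) :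
    (-Complex.I * z) ^ (n / 2 : ℂ) = -z ^ k := by
  have half_eq : (n / 2 : ℂ) = k := by
    rw [hn]
    push_cast
    ring
  have k_eq : k = 4 * (k / 4) + 2 := by omega
  have neg_I_pow : (-Complex.I) ^ k = -1 := by
    rw [k_eq, pow_add, pow_mul, neg_sq, Complex.I_sq, (by decide : Even 4).neg_pow,
      Complex.I_pow_four, one_pow, one_mul]
  rw [half_eq, Complex.cpow_natCast, mul_pow, neg_I_pow, neg_one_mul]

variable {n : ℕ} {L : Set (EuclideanSpace ℝ (Fin n))} {s : EuclideanSpace ℝ (Fin n)}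

lemma IsHalfCharacteristic.exp_norm_sq (hs : IsHalfCharacteristic L s)
    {v : EuclideanSpace ℝ (Fin n)} (hv : v ∈ L) :
    Complex.exp (π * Complex.I * ‖v‖ ^ 2) = Complex.exp (2 * π * Complex.I * ⟪v, s⟫) := by
  obtain ⟨j, hj⟩ := hs v hv
  rw [normOf, real_inner_self_eq_norm_sq] at hj
  rw [← Complex.ofReal_pow, hj, Complex.exp_eq_exp_iff_exists_int]
  exact ⟨j, by push_cast; ring⟩

lemma IsHalfCharacteristic.thetaSeries_T_smul (hs : IsHalfCharacteristic L s) (τ : ℍ) :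
    thetaSeries L (T • τ) =
      ∑' v : L, gaussian τ (v : EuclideanSpace ℝ (Fin n)) *
        Complex.exp (2 * π * Complex.I * ⟪(v : EuclideanSpace ℝ (Fin n)), s⟫) :=
  tsum_congr fun v ↦ by rw [gaussian_T_smul, hs.exp_norm_sq v.2]

namespace IsUnimodularLattice

variable (hL : IsUnimodularLattice L)

include hL

lemma summable_gaussian_add (τ : ℍ) (s : EuclideanSpace ℝ (Fin n)) :
    Summable fun v : L ↦ gaussian τ (s + v) :=
  have := hL.discreteTopology
  _root_.summable_gaussian_add hL.toSubmodule τ s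

lemma hasSum_thetaSeries (τ : ℍ) :
    HasSum (fun v : L ↦ gaussian τ (v : EuclideanSpace ℝ (Fin n))) (thetaSeries L τ) := by
  simpa only [zero_add, thetaSeries] using (hL.summable_gaussian_add τ 0).hasSum

lemma thetaSeries_I_ne_zero : thetaSeries L UpperHalfPlane.I ≠ 0 := by
  have hasSum := hL.hasSum_thetaSeries UpperHalfPlane.I
  simp only [gaussian_I] at hasSum
  have summable : Summable fun v : L ↦ Real.exp (-π * ‖(v : EuclideanSpace ℝ (Fin n))‖ ^ 2) :=
    mod_cast hasSum.summable
  rw [← hasSum.tsum_eq, ← Complex.ofReal_tsum, Complex.ofReal_ne_zero]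
  exact (summable.tsum_pos (fun v ↦ (Real.exp_pos _).le) ⟨0, hL.toSubmodule.zero_mem⟩
    (Real.exp_pos _)).ne'

theorem tsum_gaussian_S_smul (τ : ℍ) (s : EuclideanSpace ℝ (Fin n)) :
    ∑' v : L, gaussian (S • τ) (s + v) = (-Complex.I * τ) ^ (n / 2 : ℂ) *
      ∑' v : L, gaussian τ (v : EuclideanSpace ℝ (Fin n)) *
        Complex.exp (2 * π * Complex.I * ⟪(v : EuclideanSpace ℝ (Fin n)), s⟫) := by
  obtain ⟨b, b', inner_eq, span_b, span_b'⟩ := hL.exists_dual_bases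
  obtain ⟨c, inversion⟩ := exists_tsum_gaussian_S_smul inner_eq
  rw [span_b, span_b', finrank_euclideanSpace_fin] at inversion
  suffices c_eq_one : c = 1 by
    simp only [c_eq_one, one_mul] at inversion
    exact inversion τ s
  have inversion_I : thetaSeries L UpperHalfPlane.I = c * thetaSeries L UpperHalfPlane.I := by
    have inversion_zero := inversion UpperHalfPlane.I 0
    rw [S_smul_I, coe_I, neg_mul, Complex.I_mul_I, neg_neg, Complex.one_cpow, mul_one]
      at inversion_zero
    simp only [zero_add, inner_zero_right, Complex.ofReal_zero, mul_zero, Complex.exp_zero,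
      mul_one] at inversion_zero
    exact inversion_zero
  exact (right_eq_mul₀ hL.thetaSeries_I_ne_zero).mp inversion_I

lemma thetaSeries_T_T_smul (τ : ℍ) : thetaSeries L (T • T • τ) = thetaSeries L τ := by
  refine tsum_congr fun v ↦ ?_
  obtain ⟨m, hm⟩ := hL.exists_inner_eq v.2 v.2
  rw [real_inner_self_eq_norm_sq] at hm
  have exp_eq_one : Complex.exp (π * Complex.I * m + π * Complex.I * m) = 1 :=
    Complex.exp_eq_one_iff.mpr ⟨m, by ring⟩
  rw [gaussian_T_smul, gaussian_T_smul, ← Complex.ofReal_pow, hm, Complex.ofReal_intCast,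
    mul_assoc, ← Complex.exp_add, exp_eq_one, mul_one]

variable (hodd : IsOddLattice L)

include hodd

/-- The shadow is a translate of the lattice. -/
def shadowEquiv (hs : IsHalfCharacteristic L s) : L ≃ shadow L :=
  (Equiv.addLeft s).subtypeEquiv fun v ↦ by
    rw [hL.mem_shadow_iff hodd hs, Equiv.coe_addLeft, add_sub_cancel_left]

lemma coe_shadowEquiv (hs : IsHalfCharacteristic L s) (v : L) :
    (hL.shadowEquiv hodd hs v : EuclideanSpace ℝ (Fin n)) = s + v :=
  rfl

lemma hasSum_thetaSeries_shadow (τ : ℍ) :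
    HasSum (fun v : shadow L ↦ gaussian τ (v : EuclideanSpace ℝ (Fin n)))
      (thetaSeries (shadow L) τ) := by
  obtain ⟨s, hs⟩ := hL.exists_isHalfCharacteristic
  have summable := hL.summable_gaussian_add τ s
  rw [← (hL.shadowEquiv hodd hs).symm.summable_iff] at summable
  refine (summable.congr fun v ↦ ?_).hasSum
  rw [Function.comp_apply, ← hL.coe_shadowEquiv hodd hs, Equiv.apply_symm_apply]

lemma thetaSeries_shadow_eq (hs : IsHalfCharacteristic L s) (τ : ℍ) :
    thetaSeries (shadow L) τ = ∑' v : L, gaussian τ (s + v) := by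
  rw [thetaSeries, ← (hL.shadowEquiv hodd hs).tsum_eq]
  rfl

theorem isThetaTriple {k : ℕ} (hn : n = 2 * k) (hk : k % 4 = 2) :
    IsThetaTriple k (thetaSeries L) (fun τ ↦ thetaSeries L (T • τ)) (thetaSeries (shadow L)) := by
  obtain ⟨s, hs⟩ := hL.exists_isHalfCharacteristic
  refine isThetaTriple_of_S_smul (Nat.even_iff.mpr (by omega)) hL.thetaSeries_T_T_smul
    (fun τ ↦ ?_) fun τ ↦ ?_
  · simpa only [neg_I_mul_cpow hn hk, thetaSeries, zero_add, inner_zero_right,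
      Complex.ofReal_zero, mul_zero, Complex.exp_zero, mul_one] using hL.tsum_gaussian_S_smul τ 0
  · rw [hL.thetaSeries_shadow_eq hodd hs, hL.tsum_gaussian_S_smul, neg_I_mul_cpow hn hk,
      hs.thetaSeries_T_smul]

end IsUnimodularLattice

end ThetaSeries

section NormEnumerators

open UpperHalfPlane hiding I
open ModularGroup PowerSeries
open scoped Real

lemma re_gaussian_T_smul_add_gaussian {V : Type*} [NormedAddCommGroup V] (v : V) :
    (gaussian (T • UpperHalfPlane.I) v + gaussian UpperHalfPlane.I v).re =
      Real.exp (-π * ‖v‖ ^ 2) * (1 + Real.cos (π * ‖v‖ ^ 2)) := by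
  have exponent_eq : (π * Complex.I * ‖v‖ ^ 2 : ℂ) = (π * ‖v‖ ^ 2 : ℝ) * Complex.I := by
    push_cast
    ring
  rw [gaussian_T_smul, gaussian_I, exponent_eq, Complex.add_re, Complex.re_ofReal_mul,
    Complex.exp_ofReal_mul_I_re, Complex.ofReal_re]
  ring

/-- At `τ = i` the real part of `∑ v, (1 + exp (π i ‖v‖²)) exp (-π ‖v‖²) = 0` has nonnegative
terms. -/
theorem exists_odd_norm_sq_eq {V : Type*} [NormedAddCommGroup V] {M : Set V}
    (hM : ∀ τ, HasSum (fun v : M ↦ gaussian τ (v : V)) (thetaSeries M τ))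
    (hT : thetaSeries M (T • UpperHalfPlane.I) = -thetaSeries M UpperHalfPlane.I) {v : V}
    (hv : v ∈ M) : ∃ r : ℕ, Odd r ∧ ‖v‖ ^ 2 = r := by
  have hasSum_zero := (hM (T • UpperHalfPlane.I)).add (hM UpperHalfPlane.I)
  rw [hT, neg_add_cancel] at hasSum_zero
  have hasSum_re_zero := Complex.hasSum_re hasSum_zero
  simp only [re_gaussian_T_smul_add_gaussian, Complex.zero_re] at hasSum_re_zero
  have terms_nonneg (w : M) :
      0 ≤ Real.exp (-π * ‖(w : V)‖ ^ 2) * (1 + Real.cos (π * ‖(w : V)‖ ^ 2)) :=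
    mul_nonneg (Real.exp_nonneg _) (by linarith [Real.neg_one_le_cos (π * ‖(w : V)‖ ^ 2)])
  have term_eq_zero := congrFun ((hasSum_zero_iff_of_nonneg terms_nonneg).mp hasSum_re_zero) ⟨v, hv⟩
  have one_add_cos_eq_zero := (mul_eq_zero.mp term_eq_zero).resolve_left (Real.exp_ne_zero _)
  obtain ⟨k, hk⟩ := Real.cos_eq_neg_one_iff.mp (eq_neg_of_add_eq_zero_right one_add_cos_eq_zero)
  have norm_sq_eq : ‖v‖ ^ 2 = (1 + 2 * k : ℤ) := by
    push_cast
    exact mul_left_cancel₀ Real.pi_ne_zero (by linear_combination -hk)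
  have nonneg : 0 ≤ 1 + 2 * k := by
    have cast_nonneg := norm_sq_eq ▸ sq_nonneg ‖v‖
    exact mod_cast cast_nonneg
  lift k to ℕ using by omega
  exact ⟨1 + 2 * k, odd_one.add_even (even_two_mul k), mod_cast norm_sq_eq⟩

variable {n : ℕ} {M L : Set (EuclideanSpace ℝ (Fin n))}

lemma gaussian_eq_nome_pow {v : EuclideanSpace ℝ (Fin n)} {r : ℕ} (h : normOf v = r) (τ : ℍ) :
    gaussian τ v = nome τ ^ r := by
  rw [normOf, real_inner_self_eq_norm_sq] at h
  rw [gaussian, nome_eq, ← Complex.ofReal_pow, h, ← Complex.exp_nat_mul, Complex.ofReal_natCast,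
    mul_comm]

/-- The power series `∑ N(r) Xʳ`, where `N(r)` is the number of vectors of norm `r` in `M`. -/
def normEnumerator (M : Set (EuclideanSpace ℝ (Fin n))) : ℂ⟦X⟧ :=
  PowerSeries.mk fun r ↦ (numVecsOfNorm M r : ℂ)

theorem hasNomeExpansion_thetaSeries (h : ∀ v ∈ M, ∃ r : ℕ, normOf v = r)
    (hM : ∀ τ, HasSum (fun v : M ↦ gaussian τ (v : EuclideanSpace ℝ (Fin n))) (thetaSeries M τ)) :
    HasNomeExpansion (thetaSeries M) (normEnumerator M) := by
  choose e he using fun v : M ↦ h v v.2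
  have ncard_eq (r : ℕ) : {v | e v = r}.ncard = numVecsOfNorm M r := by
    rw [numVecsOfNorm, ← Set.ncard_image_of_injective _ Subtype.val_injective]
    congr 1
    ext v
    constructor
    · rintro ⟨v, rfl, rfl⟩
      exact ⟨v.2, he v⟩
    · rintro ⟨hv, norm_eq⟩
      exact ⟨⟨v, hv⟩, Nat.cast_injective (R := ℝ) ((he ⟨v, hv⟩).symm.trans norm_eq), rfl⟩
  have expansion := hasNomeExpansion_of_hasSum_nome_pow fun τ ↦
    (hM τ).congr_fun fun v ↦ (gaussian_eq_nome_pow (he v) τ).symm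
  simp only [ncard_eq] at expansion
  exact expansion

lemma numVecsOfNorm_eq_zero {r : ℝ} (h : ∀ v ∈ M, normOf v ≠ r) : numVecsOfNorm M r = 0 := by
  have eq_empty : {v ∈ M | normOf v = r} = ∅ :=
    Set.eq_empty_of_forall_notMem fun v hv ↦ h v hv.1 hv.2
  rw [numVecsOfNorm, eq_empty, Set.ncard_empty]

lemma HasMinNorm.numVecsOfNorm_eq_zero {r t : ℝ} (hmin : HasMinNorm M r) (t_pos : 0 < t)
    (t_lt : t < r) : numVecsOfNorm M t = 0 := by
  refine _root_.numVecsOfNorm_eq_zero fun v hv norm_eq ↦ t_lt.not_ge ?_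
  refine norm_eq ▸ hmin.2 ⟨v, hv, ?_, rfl⟩
  rintro rfl
  rw [normOf, inner_zero_left] at norm_eq
  exact t_pos.ne norm_eq

namespace IsUnimodularLattice

variable (hL : IsUnimodularLattice L)

include hL

lemma exists_normOf_eq_natCast {v : EuclideanSpace ℝ (Fin n)} (hv : v ∈ L) :
    ∃ r : ℕ, normOf v = r := by
  obtain ⟨m, hm⟩ := hL.exists_inner_eq hv hv
  have nonneg : 0 ≤ m := by
    have cast_nonneg := hm ▸ real_inner_self_nonneg (x := v)
    exact mod_cast cast_nonneg
  lift m to ℕ using nonneg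
  exact ⟨m, mod_cast hm⟩

theorem hasNomeExpansion_thetaSeries : HasNomeExpansion (thetaSeries L) (normEnumerator L) :=
  _root_.hasNomeExpansion_thetaSeries (fun _ ↦ hL.exists_normOf_eq_natCast) hL.hasSum_thetaSeries

lemma numVecsOfNorm_zero : numVecsOfNorm L 0 = 1 := by
  refine Set.ncard_eq_one.mpr ⟨0, Set.ext fun v ↦ ?_⟩
  simp only [normOf, inner_self_eq_zero, Set.mem_ofPred_eq, Set.mem_singleton_iff,
    and_iff_right_iff_imp]
  rintro rfl
  exact hL.toSubmodule.zero_mem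

lemma hasInitialCoeffs_normEnumerator (hmin : HasMinNorm L 4) :
    HasInitialCoeffs (normEnumerator L) 1 0 0 0 (numVecsOfNorm L 4) (numVecsOfNorm L 5)
      (numVecsOfNorm L 6) := by
  have eq_zero {r : ℝ} (r_pos : 0 < r) (r_lt : r < 4) := hmin.numVecsOfNorm_eq_zero r_pos r_lt
  constructor <;> norm_num [normEnumerator, hL.numVecsOfNorm_zero, eq_zero]

section Shadow

variable (hodd : IsOddLattice L) {k : ℕ} (hn : n = 2 * k) (hk : k % 4 = 2)

include hodd hn hk

theorem exists_odd_normOf_eq {v : EuclideanSpace ℝ (Fin n)} (hv : v ∈ shadow L) :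
    ∃ r : ℕ, Odd r ∧ normOf v = r := by
  rw [normOf, real_inner_self_eq_norm_sq]
  exact exists_odd_norm_sq_eq (hL.hasSum_thetaSeries_shadow hodd)
    ((hL.isThetaTriple hodd hn hk).third_T _) hv

theorem hasNomeExpansion_thetaSeries_shadow :
    HasNomeExpansion (thetaSeries (shadow L)) (normEnumerator (shadow L)) :=
  _root_.hasNomeExpansion_thetaSeries
    (fun _ hv ↦ (hL.exists_odd_normOf_eq hodd hn hk hv).imp fun _ h ↦ h.2)
    (hL.hasSum_thetaSeries_shadow hodd)

lemma coeff_normEnumerator_shadow_of_even {r : ℕ} (hr : Even r) :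
    (normEnumerator (shadow L)).coeff r = 0 := by
  rw [normEnumerator, coeff_mk, Nat.cast_eq_zero]
  refine numVecsOfNorm_eq_zero fun v hv norm_eq ↦ ?_
  obtain ⟨t, ht, norm_eq'⟩ := hL.exists_odd_normOf_eq hodd hn hk hv
  rw [Nat.cast_injective (norm_eq.symm.trans norm_eq')] at hr
  exact Nat.not_even_iff_odd.mpr ht hr

lemma hasInitialCoeffs_normEnumerator_shadow :
    HasInitialCoeffs (normEnumerator (shadow L)) 0 (numVecsOfNorm (shadow L) 1)
      0 (numVecsOfNorm (shadow L) 3) 0 (numVecsOfNorm (shadow L) 5) 0 := by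
  have even_coeff {r : ℕ} (hr : Even r) := hL.coeff_normEnumerator_shadow_of_even hodd hn hk hr
  refine ⟨even_coeff ?_, ?_, even_coeff ?_, ?_, even_coeff ?_, ?_, even_coeff ?_⟩
  all_goals first | decide | simp [normEnumerator]

end Shadow

end IsUnimodularLattice

end NormEnumerators

section IntegerLattice

open PowerSeries

variable {n : ℕ}

/-- The translate of the lattice `ℤⁿ` by the vector `(c, …, c)`. -/
def integerTranslate (n : ℕ) (c : ℝ) : Set (EuclideanSpace ℝ (Fin n)) :=
  {x | ∀ i, ∃ m : ℤ, x i = m + c}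

lemma mem_integerTranslate_zero {x : EuclideanSpace ℝ (Fin n)} :
    x ∈ integerTranslate n 0 ↔ ∀ i, ∃ m : ℤ, x i = m := by
  simp only [integerTranslate, add_zero, Set.mem_ofPred_eq]

lemma normOf_eq_sum (x : EuclideanSpace ℝ (Fin n)) : normOf x = ∑ i, x i ^ 2 := by
  rw [normOf, real_inner_self_eq_norm_sq, EuclideanSpace.real_norm_sq_eq]

lemma single_mem_integerTranslate_zero (i : Fin n) :
    EuclideanSpace.single i 1 ∈ integerTranslate n 0 :=
  mem_integerTranslate_zero.mpr fun j ↦ ⟨if j = i then 1 else 0, by simp⟩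

lemma isUnimodularLattice_integerTranslate_zero :
    IsUnimodularLattice (integerTranslate n 0) := by
  ext x
  rw [mem_integerTranslate_zero]
  constructor
  · intro hx y hy
    choose a ha using hx
    choose b hb using mem_integerTranslate_zero.mp hy
    exact ⟨∑ i, a i * b i, by simp [PiLp.inner_apply, ha, hb, mul_comm]⟩
  · intro hx i
    obtain ⟨m, hm⟩ := hx _ (single_mem_integerTranslate_zero i)
    rw [EuclideanSpace.inner_single_right, one_mul, conj_trivial] at hm
    exact ⟨m, hm⟩

lemma isOddLattice_integerTranslate_zero (hn : 0 < n) : IsOddLattice (integerTranslate n 0) :=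
  ⟨_, single_mem_integerTranslate_zero ⟨0, hn⟩, 1, odd_one, by simp [normOf]⟩

lemma isHalfCharacteristic_half :
    IsHalfCharacteristic (integerTranslate n 0) (WithLp.toLp 2 fun _ ↦ 1 / 2) := by
  intro x hx
  choose a ha using mem_integerTranslate_zero.mp hx
  choose b hb using fun i ↦ Int.even_mul_pred_self (a i)
  refine ⟨∑ i, b i, ?_⟩
  rw [normOf_eq_sum, PiLp.inner_apply, Int.cast_sum, ← Finset.sum_add_distrib, Finset.mul_sum]
  refine Finset.sum_congr rfl fun i _ ↦ ?_
  have hb' : (a i : ℝ) * (a i - 1) = b i + b i := mod_cast hb i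
  simp only [ha, RCLike.inner_apply, conj_trivial]
  linear_combination hb'

lemma shadow_integerTranslate_zero (hn : 0 < n) :
    shadow (integerTranslate n 0) = integerTranslate n (1 / 2) := by
  ext x
  rw [isUnimodularLattice_integerTranslate_zero.mem_shadow_iff
    (isOddLattice_integerTranslate_zero hn) isHalfCharacteristic_half, mem_integerTranslate_zero]
  simp only [PiLp.sub_apply, sub_eq_iff_eq_add, integerTranslate, Set.mem_ofPred_eq]

lemma numVecsOfNorm_integerTranslate (c r : ℝ) :
    numVecsOfNorm (integerTranslate n c) r =
      {a : Fin n → ℤ | ∑ i, (a i + c) ^ 2 = r}.ncard := by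
  let f (a : Fin n → ℤ) : EuclideanSpace ℝ (Fin n) := WithLp.toLp 2 fun i ↦ a i + c
  have f_injective : Function.Injective f := fun a b hab ↦
    funext fun i ↦ Int.cast_injective (add_right_cancel (congrArg (· i) hab))
  rw [numVecsOfNorm, ← Set.ncard_image_of_injective _ f_injective]
  congr 1
  ext x
  constructor
  · rintro ⟨hx, norm_eq⟩
    choose a ha using hx
    have f_eq : f a = x := PiLp.ext fun i ↦ (ha i).symm
    exact ⟨a, (normOf_eq_sum (f a)).symm.trans (f_eq ▸ norm_eq), f_eq⟩
  · rintro ⟨a, ha, rfl⟩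
    exact ⟨fun i ↦ ⟨a i, rfl⟩, (normOf_eq_sum (f a)).trans ha⟩

lemma ncard_setOf_sum_eq {ι : Type*} [Fintype ι] [DecidableEq ι] {g : ℤ → ℤ} {t : ℤ}
    (s : Finset ℤ) (hg : ∀ m, 0 ≤ g m) (hs : ∀ m, g m ≤ t → m ∈ s) :
    {a : ι → ℤ | ∑ i, g (a i) = t}.ncard =
      (Finset.filter (fun a ↦ ∑ i, g (a i) = t) (Fintype.piFinset fun _ : ι ↦ s)).card := by
  rw [← Set.ncard_coe_finset]
  congr 1
  ext a
  rw [Finset.mem_coe, Finset.mem_filter, Fintype.mem_piFinset, Set.mem_ofPred_eq]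
  refine (and_iff_right_of_imp fun sum_eq i ↦ hs _ ?_).symm
  exact sum_eq ▸ Finset.single_le_sum (fun j _ ↦ hg (a j)) (Finset.mem_univ i)

lemma numVecsOfNorm_integerTranslate_zero {r : ℕ} (hr : r ≤ 6) :
    numVecsOfNorm (integerTranslate n 0) r =
      (Finset.filter (fun a ↦ ∑ i, a i ^ 2 = (r : ℤ))
        (Fintype.piFinset fun _ : Fin n ↦ Finset.Icc (-2) 2)).card := by
  rw [numVecsOfNorm_integerTranslate, ← ncard_setOf_sum_eq _ sq_nonneg fun m hm ↦ ?_]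
  · simp only [add_zero]
    norm_cast
  · rw [Finset.mem_Icc]
    constructor <;> nlinarith

lemma numVecsOfNorm_integerTranslate_half {r : ℕ} (hr : r ≤ 5) :
    numVecsOfNorm (integerTranslate 4 (1 / 2)) r =
      (Finset.filter (fun a ↦ ∑ i, a i * (a i + 1) = (r - 1 : ℤ))
        (Fintype.piFinset fun _ : Fin 4 ↦ Finset.Icc (-2) 1)).card := by
  rw [numVecsOfNorm_integerTranslate, ← ncard_setOf_sum_eq (g := fun m ↦ m * (m + 1)) _
    (fun m ↦ ?_) fun m hm ↦ ?_]
  · have sum_eq (a : Fin 4 → ℤ) :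
        ∑ i, (a i + 1 / 2 : ℝ) ^ 2 = (∑ i, a i * (a i + 1) : ℤ) + 1 := by
      simp only [Fin.sum_univ_four]
      push_cast
      ring
    simp only [sum_eq, ← eq_sub_iff_add_eq]
    norm_cast
  · rcases le_or_gt 0 m with m_nonneg | m_neg
    · positivity
    · exact mul_nonneg_of_nonpos_of_nonpos m_neg.le m_neg
  · rw [Finset.mem_Icc]
    constructor <;> nlinarith

lemma hasInitialCoeffs_normEnumerator_integerTranslate_zero :
    HasInitialCoeffs (normEnumerator (integerTranslate 4 0)) 1 8 24 32 24 48 96 := by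
  constructor
  all_goals
    rw [normEnumerator, coeff_mk, numVecsOfNorm_integerTranslate_zero]
    -- The closing `rfl` of `norm_cast` evaluates the cardinality.
    · norm_cast
    · decide

lemma hasInitialCoeffs_normEnumerator_shadow_integerTranslate_zero :
    HasInitialCoeffs (normEnumerator (shadow (integerTranslate 4 0))) 0 16 0 64 0 96 0 := by
  have coeffs := isUnimodularLattice_integerTranslate_zero.hasInitialCoeffs_normEnumerator_shadow
    (isOddLattice_integerTranslate_zero four_pos) (k := 2) rfl rfl
  refine ⟨coeffs.coeff_zero, ?_, coeffs.coeff_two, ?_, coeffs.coeff_four, ?_, coeffs.coeff_six⟩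
  all_goals
    rw [normEnumerator, coeff_mk, shadow_integerTranslate_zero four_pos,
      numVecsOfNorm_integerTranslate_half]
    · norm_cast
    · decide

end IntegerLattice

theorem numVecsOfNorm_relations {L : Set (EuclideanSpace ℝ (Fin 44))}
    (hL : IsUnimodularLattice L) (hodd : IsOddLattice L) (hmin : HasMinNorm L 4) :
    numVecsOfNorm L 4 =
        6600 + 16 * (numVecsOfNorm (shadow L) 3 + 76 * numVecsOfNorm (shadow L) 1) ∧
      8 * numVecsOfNorm L 4 + numVecsOfNorm L 5 + 65536 * numVecsOfNorm (shadow L) 1 =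
        863808 := by
  have hZ := isUnimodularLattice_integerTranslate_zero (n := 4)
  have hZ_odd := isOddLattice_integerTranslate_zero (n := 4) four_pos
  have triple := hL.isThetaTriple hodd (k := 22) rfl rfl
  have triple_Z := hZ.isThetaTriple hZ_odd (k := 2) rfl rfl
  have relations := triple.coeff_relations triple_Z
    hL.hasNomeExpansion_thetaSeries
    (hL.hasNomeExpansion_thetaSeries_shadow hodd (k := 22) rfl rfl)
    hZ.hasNomeExpansion_thetaSeries
    (hZ.hasNomeExpansion_thetaSeries_shadow hZ_odd (k := 2) rfl rfl)
    (hL.hasInitialCoeffs_normEnumerator hmin)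
    (hL.hasInitialCoeffs_normEnumerator_shadow hodd (k := 22) rfl rfl)
    hasInitialCoeffs_normEnumerator_integerTranslate_zero
    hasInitialCoeffs_normEnumerator_shadow_integerTranslate_zero
  exact mod_cast relations

theorem theta_series_dim44 {L : Set (EuclideanSpace ℝ (Fin 44))}
    (huni : IsUnimodularLattice L) (hodd : IsOddLattice L) (hmin : HasMinNorm L 4) :
    ∃ α β : ℕ,
      (numVecsOfNorm L 4 : ℤ) = 6600 + 16 * (α : ℤ) ∧
      (numVecsOfNorm L 5 : ℤ) = 811008 - 128 * (α : ℤ) - 65536 * (β : ℤ) ∧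
      numVecsOfNorm (shadow L) 1 = β ∧
      (numVecsOfNorm (shadow L) 3 : ℤ) = (α : ℤ) - 76 * (β : ℤ) := by
  obtain ⟨norm_four, norm_five⟩ := numVecsOfNorm_relations huni hodd hmin
  refine ⟨numVecsOfNorm (shadow L) 3 + 76 * numVecsOfNorm (shadow L) 1,
    numVecsOfNorm (shadow L) 1, ?_, ?_, rfl, ?_⟩ <;> omega
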